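/- arXiv:2203.06143 — 2 statements merged into one kernel-verified Lean document; each statement's English description precedes it below -/
import Mathlib

section
/- Let D be a generalized twisted drawing of K_4 with vertices labeled v_1, v_2, v_3, v_4 so that the rays from O through v_1, v_2, v_3, v_4 appear in counterclockwise order around O and the ray r lies counterclockwise between the ray through v_4 and the ray through v_1. Then the edges v_1v_3 and v_2v_4 do not cross; that is, their arcs are disjoint. -/
/-!
Put `O` at the origin of polar coordinates, and let `θ₁ < θ₂ < θ₃ < θ₄` be the angles of the
vertices, all in the open turn that starts at the ray `r`. The angle along an edge lifts to a
continuous real function, which is injective modulo `2π` by c-monotonicity, hence strictly monotone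
with range shorter than `2π`. As every edge meets `r`, the edge `vᵢvⱼ` with `i < j` is forced to
run over exactly `[θⱼ, θᵢ + 2π]`, so it is the polar graph of a continuous radial function `Fᵢⱼ`
there (`edge_graph`). Two edges with a common vertex have different radii at every angle
other than that of this vertex, so one of them stays above the other.

Suppose `v₁v₃` and `v₂v₄` meet, necessarily at an angle `c ∈ [θ₄, θ₁ + 2π]`. The edge `v₁v₄` passes
above both or below both of them at `c`; inverting radii, assume above. Following `v₁v₄` to
its two ends, `v₁v₃` passes below `v₄` and `v₂v₄` passes below `v₁`. Comparing `v₁v₂` and `v₃v₄` with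
these two edges shows that `v₁v₂` passes above `v₄` and above `v₃`, and that `v₃v₄` passes above `v₁`
and above `v₂`. Hence `v₁v₂` and `v₃v₄` change order over `[θ₄, θ₁ + 2π]` and again over `[θ₂, θ₃]`
(where `v₃v₄` is read one turn later), so they meet at two distinct points, which is impossible. The
lemma `no_common_radius` is this argument for real functions; negating all of them exchanges the
cases "above" and "below".
-/

open Set

/-- Points of the plane. -/
abbrev Pt : Type := ℝ × ℝ

/-- `A` is a simple (continuous, injective) arc from `p` to `q`. -/
def IsSimpleArc (A : Set Pt) (p q : Pt) : Prop :=
  ∃ f : ℝ → Pt, ContinuousOn f (Set.Icc 0 1) ∧ Set.InjOn f (Set.Icc 0 1) ∧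
    f 0 = p ∧ f 1 = q ∧ A = f '' Set.Icc 0 1

/-- A simple drawing of the complete graph `K n` in the plane:  vertices are distinct
points, edges are simple arcs connecting their endpoints, no edge passes through a
vertex other than its endpoints, two edges sharing an endpoint meet exactly in that
endpoint, and two independent edges meet in at most one point. -/
structure SimpleDrawing (n : ℕ) where
  vtx : Fin n → Pt
  vtx_inj : Function.Injective vtx
  arc : Fin n → Fin n → Set Pt
  arc_symm : ∀ i j, arc i j = arc j i
  arc_simple : ∀ i j, i ≠ j → IsSimpleArc (arc i j) (vtx i) (vtx j)
  vtx_not_mem : ∀ i j k, i ≠ j → k ≠ i → k ≠ j → vtx k ∉ arc i j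
  adj_inter : ∀ i j k, i ≠ j → i ≠ k → j ≠ k → arc i j ∩ arc i k = {vtx i}
  indep_inter : ∀ i j k l, i ≠ j → k ≠ l → i ≠ k → i ≠ l → j ≠ k → j ≠ l →
    (arc i j ∩ arc k l).Subsingleton

namespace SimpleDrawing

variable {n : ℕ}

/-- The union of all edges of the drawing. -/
def drawingSet (D : SimpleDrawing n) : Set Pt :=
  ⋃ (i : Fin n) (j : Fin n) (_ : i ≠ j), D.arc i j

/-- The edges `v_i v_j` and `v_k v_l` cross: they meet in a point that is not a common
endpoint of the two edges. -/
def Crosses (D : SimpleDrawing n) (i j k l : Fin n) : Prop :=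
  ∃ x : Pt, x ∈ D.arc i j ∧ x ∈ D.arc k l ∧
    ¬ ((x = D.vtx i ∨ x = D.vtx j) ∧ (x = D.vtx k ∨ x = D.vtx l))

end SimpleDrawing

/-- The ray emanating from `O` in direction `d`. -/
def rayFrom (O d : Pt) : Set Pt := {x : Pt | ∃ t : ℝ, 0 ≤ t ∧ x = O + t • d}

namespace SimpleDrawing

/-- `D` is c-monotone with respect to the point `O`: `O` does not lie on the drawing and
every ray emanating from `O` meets every edge of `D` in at most one point. -/
def CMonotoneAt (D : SimpleDrawing n) (O : Pt) : Prop :=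
  O ∉ D.drawingSet ∧
    ∀ d : Pt, d ≠ 0 → ∀ i j : Fin n, i ≠ j → (rayFrom O d ∩ D.arc i j).Subsingleton

/-- `D` is c-monotone. -/
def CMonotone (D : SimpleDrawing n) : Prop := ∃ O : Pt, D.CMonotoneAt O

/-- `D` is generalized twisted with respect to `O` and the ray from `O` with direction `d`:
`D` is c-monotone with respect to `O` and the ray meets every edge of `D`. -/
def GenTwistedAt (D : SimpleDrawing n) (O d : Pt) : Prop :=
  D.CMonotoneAt O ∧ d ≠ 0 ∧ ∀ i j : Fin n, i ≠ j → (rayFrom O d ∩ D.arc i j).Nonempty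

/-- `D` is generalized twisted. -/
def GenTwisted (D : SimpleDrawing n) : Prop := ∃ O d : Pt, D.GenTwistedAt O d

/-- The vertices `v_1, …, v_n` of `D` appear counterclockwise around `O`, at angles
`θ 0 < θ 1 < … < θ (n-1)`, all lying strictly (counterclockwise) between the angle `φ`
of the ray `r` with direction `d` and `φ + 2π`;  i.e. the vertices are labeled
counterclockwise around `O` and the ray `r` lies counterclockwise between the ray through
`v_n` and the ray through `v_1`. -/
def IsCCWLabeling (D : SimpleDrawing n) (O d : Pt) (φ : ℝ) (θ : Fin n → ℝ) : Prop :=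
  (∃ s : ℝ, 0 < s ∧ d = s • ((Real.cos φ, Real.sin φ) : Pt)) ∧
  StrictMono θ ∧
  (∀ i : Fin n, θ i ∈ Set.Ioo φ (φ + 2 * Real.pi)) ∧
  (∀ i : Fin n, ∃ s : ℝ, 0 < s ∧
    D.vtx i = O + s • ((Real.cos (θ i), Real.sin (θ i)) : Pt))

/-- `C` is a cell of `D`: a connected component of the complement of the drawing. -/
def IsCell (D : SimpleDrawing n) (C : Set Pt) : Prop :=
  ∃ x : Pt, x ∉ D.drawingSet ∧ C = connectedComponentIn D.drawingSetᶜ x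

/-- `C` is a vi-cell of `D`: a cell whose closure contains a vertex. -/
def IsViCell (D : SimpleDrawing n) (C : Set Pt) : Prop :=
  D.IsCell C ∧ ∃ i : Fin n, D.vtx i ∈ closure C

/-- The triangle of `D` on the three vertices `i`, `j`, `k` (as a subset of the plane). -/
def triangleSet (D : SimpleDrawing n) (i j k : Fin n) : Set Pt :=
  D.arc i j ∪ D.arc j k ∪ D.arc i k

/-- Two cells are antipodal if for every triangle of `D` they lie in different sides
(connected components of the complement) of that triangle. -/
def Antipodal (D : SimpleDrawing n) (C₁ C₂ : Set Pt) : Prop :=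
  ∀ i j k : Fin n, i ≠ j → j ≠ k → i ≠ k →
    ∀ x ∈ C₁, ∀ y ∈ C₂,
      connectedComponentIn (D.triangleSet i j k)ᶜ x ≠
        connectedComponentIn (D.triangleSet i j k)ᶜ y

/-- `D` and `E` are weakly isomorphic: some bijection of the vertices preserves
crossing pairs of edges. -/
def WeaklyIso (D E : SimpleDrawing n) : Prop :=
  ∃ σ : Fin n ≃ Fin n, ∀ i j k l : Fin n, i ≠ j → k ≠ l →
    (D.Crosses i j k l ↔ E.Crosses (σ i) (σ j) (σ k) (σ l))

end SimpleDrawing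

/-! ### Polar coordinates -/

/-- The point with polar coordinates `(s, β)` (radius and angle) with respect to the origin `O`. -/
noncomputable def polar (O : Pt) (s β : ℝ) : Pt := O + s • ((Real.cos β, Real.sin β) : Pt)

theorem polar_add_two_pi (O : Pt) (s β : ℝ) : polar O s (β + 2 * Real.pi) = polar O s β := by
  simp [polar]

theorem polar_add_int (O : Pt) (s β : ℝ) (k : ℤ) :
    polar O s (β + 2 * Real.pi * k) = polar O s β := by
  have h : β + 2 * Real.pi * k = β + k * (2 * Real.pi) := by ring
  simp [polar, h]

theorem polar_inj {O : Pt} {s s' β β' : ℝ} (hs : 0 < s) (hs' : 0 < s')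
    (h : polar O s β = polar O s' β') : s = s' ∧ ∃ k : ℤ, β = β' + 2 * Real.pi * k := by
  simp only [polar, add_right_inj, Prod.smul_mk, smul_eq_mul, Prod.mk.injEq] at h
  obtain ⟨h1, h2⟩ := h
  have hss : s = s' := by
    have e1 := Real.cos_sq_add_sin_sq β
    have e2 := Real.cos_sq_add_sin_sq β'
    have : s ^ 2 = s' ^ 2 := by
      calc s ^ 2 = (s * Real.cos β) ^ 2 + (s * Real.sin β) ^ 2 := by
            linear_combination (-s ^ 2) * e1
        _ = (s' * Real.cos β') ^ 2 + (s' * Real.sin β') ^ 2 := by rw [h1, h2]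
        _ = s' ^ 2 := by linear_combination (s' ^ 2) * e2
    exact (pow_left_inj₀ hs.le hs'.le two_ne_zero).1 this
  subst hss
  have hc := mul_left_cancel₀ hs.ne' h1
  have hsn := mul_left_cancel₀ hs.ne' h2
  obtain ⟨k, hk⟩ := Real.Angle.angle_eq_iff_two_pi_dvd_sub.1 (Real.Angle.cos_sin_inj hc hsn)
  exact ⟨rfl, k, by linarith⟩

theorem int_eq_of_lt {k m : ℤ} (h1 : 2 * Real.pi * (m - 1) < 2 * Real.pi * k)
    (h2 : 2 * Real.pi * k < 2 * Real.pi * (m + 1)) : k = m := by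
  have hp := Real.two_pi_pos
  have h1' := lt_of_mul_lt_mul_left h1 hp.le
  have h2' := lt_of_mul_lt_mul_left h2 hp.le
  have a : m - 1 < k := by exact_mod_cast h1'
  have b : k < m + 1 := by exact_mod_cast h2'
  omega

/-- A path avoiding `O` has continuous polar coordinates, with prescribed initial angle. The angle
is obtained by lifting the direction along the covering `Circle.exp`. -/
theorem exists_polar_lift {O : Pt} {f : unitInterval → Pt} (hf : Continuous f)
    (hO : ∀ t, f t ≠ O) {s β : ℝ} (hs : 0 < s) (h0 : f 0 = polar O s β) :
    ∃ α r : unitInterval → ℝ, Continuous α ∧ Continuous r ∧ (∀ t, 0 < r t) ∧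
      (∀ t, f t = polar O (r t) (α t)) ∧ α 0 = β := by
  let z : unitInterval → ℂ := fun t => ⟨(f t).1 - O.1, (f t).2 - O.2⟩
  have hz : Continuous z := by
    have : z = fun t => (((f t).1 - O.1 : ℝ) : ℂ) + (((f t).2 - O.2 : ℝ) : ℂ) * Complex.I := by
      funext t
      exact Complex.mk_eq_add_mul_I _ _
    rw [this]
    fun_prop
  have hz0 : ∀ t, z t ≠ 0 := by
    intro t h
    apply hO t
    have h1 : (f t).1 - O.1 = 0 := congrArg Complex.re h
    have h2 : (f t).2 - O.2 = 0 := congrArg Complex.im h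
    exact Prod.ext (by linarith) (by linarith)
  have hn : ∀ t, 0 < ‖z t‖ := fun t => norm_pos_iff.2 (hz0 t)
  let γ : C(unitInterval, Circle) :=
    ⟨fun t => ⟨z t / (‖z t‖ : ℂ), mem_sphere_zero_iff_norm.2 (by simp [(hn t).ne'])⟩, by
      refine Continuous.subtype_mk (hz.div (by fun_prop) fun t => ?_) _
      exact_mod_cast (hn t).ne'⟩
  have hγ : ∀ t, ((γ t : Circle) : ℂ) = z t / (‖z t‖ : ℂ) := fun t => rfl
  have hz0' : z 0 = (s : ℂ) * Complex.exp (β * Complex.I) := by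
    apply Complex.ext
    · simp [z, h0, polar, Complex.exp_ofReal_mul_I_re, Complex.exp_ofReal_mul_I_im]
    · simp [z, h0, polar, Complex.exp_ofReal_mul_I_re, Complex.exp_ofReal_mul_I_im]
  have hγ0 : γ 0 = Circle.exp β := by
    apply Circle.ext
    rw [hγ, hz0', Circle.coe_exp, norm_mul, Complex.norm_exp_ofReal_mul_I, mul_one,
      Complex.norm_real, Real.norm_of_nonneg hs.le]
    have : (s : ℂ) ≠ 0 := by exact_mod_cast hs.ne'
    field_simp
  let Γ := Circle.isCoveringMap_exp.liftPath γ β hγ0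
  have hΓ : ∀ t, Circle.exp (Γ t) = γ t := fun t =>
    congrFun (Circle.isCoveringMap_exp.liftPath_lifts γ β hγ0) t
  refine ⟨Γ, fun t => ‖z t‖, Γ.continuous, hz.norm, hn, fun t => ?_,
    Circle.isCoveringMap_exp.liftPath_zero γ β hγ0⟩
  have key : z t = (‖z t‖ : ℂ) * Complex.exp (Γ t * Complex.I) := by
    rw [← Circle.coe_exp, hΓ, hγ]
    have : (‖z t‖ : ℂ) ≠ 0 := by exact_mod_cast (hn t).ne'
    field_simp
  have hre : (f t).1 - O.1 = ‖z t‖ * Real.cos (Γ t) := by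
    have := congrArg Complex.re key
    rwa [Complex.re_ofReal_mul, Complex.exp_ofReal_mul_I_re] at this
  have him : (f t).2 - O.2 = ‖z t‖ * Real.sin (Γ t) := by
    have := congrArg Complex.im key
    rwa [Complex.im_ofReal_mul, Complex.exp_ofReal_mul_I_im] at this
  apply Prod.ext
  · simp only [polar, Prod.fst_add, Prod.smul_mk, smul_eq_mul]
    linarith
  · simp only [polar, Prod.snd_add, Prod.smul_mk, smul_eq_mul]
    linarith

/-! ### Edges as polar graphs -/

/-- A simple arc missing `O`, meeting every ray from `O` at most once and the ray at angle `φ` at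
least once, with end angles `a < b` inside the turn `(φ, φ + 2π)`, is the polar graph over
`[b, a + 2π]` of a positive continuous radial function `ρ`. The function `ρ` is defined on all of
`ℝ`, with no meaning outside this interval. -/
theorem arc_graph {A : Set Pt} {O p q : Pt} {φ a b s s' : ℝ} (hA : IsSimpleArc A p q)
    (hO : O ∉ A) (hmono : ∀ d : Pt, d ≠ 0 → (rayFrom O d ∩ A).Subsingleton)
    (hmeet : ∃ u : ℝ, 0 < u ∧ polar O u φ ∈ A)
    (hφ : φ < a) (hab : a < b) (hb : b < φ + 2 * Real.pi)
    (hs : 0 < s) (hs' : 0 < s') (hp : p = polar O s a) (hq : q = polar O s' b) :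
    ∃ ρ : ℝ → ℝ, Continuous ρ ∧
      (∀ β ∈ Icc b (a + 2 * Real.pi), 0 < ρ β ∧ polar O (ρ β) β ∈ A) ∧
      (∀ x ∈ A, ∃ β ∈ Icc b (a + 2 * Real.pi), x = polar O (ρ β) β) ∧
      ρ b = s' ∧ ρ (a + 2 * Real.pi) = s := by
  have hpi := Real.two_pi_pos
  obtain ⟨f, hfc, hfi, hf0, hf1, rfl⟩ := hA
  have hg : Continuous fun t : unitInterval => f t := continuousOn_iff_continuous_domRestrict.1 hfc
  have hgA : ∀ t : unitInterval, f t ∈ f '' Icc 0 1 := fun t => ⟨t, t.2, rfl⟩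
  have hgO : ∀ t : unitInterval, f t ≠ O := fun t h => hO (h ▸ hgA t)
  obtain ⟨α, r, hα, hr, hr0, hfα, hα0⟩ := exists_polar_lift (β := a + 2 * Real.pi) hg hgO hs
    (by rw [polar_add_two_pi, ← hp, ← hf0]; rfl)
  have hmod : ∀ t t' : unitInterval, ∀ k : ℤ, α t = α t' + 2 * Real.pi * k → t = t' := by
    intro t t' k hk
    have hd : ((Real.cos (α t'), Real.sin (α t')) : Pt) ≠ 0 := by
      intro h
      have h1 : Real.cos (α t') = 0 := congrArg Prod.fst h
      have h2 : Real.sin (α t') = 0 := congrArg Prod.snd h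
      have := Real.cos_sq_add_sin_sq (α t')
      rw [h1, h2] at this
      norm_num at this
    have e := hmono _ hd (x := f t) ⟨⟨r t, (hr0 t).le, by rw [hfα, hk, polar_add_int]; rfl⟩, hgA t⟩
      (y := f t') ⟨⟨r t', (hr0 t').le, hfα t'⟩, hgA t'⟩
    exact Subtype.ext (hfi t.2 t'.2 e)
  have hinj : Function.Injective α := fun t t' h => hmod t t' 0 (by simpa using h)
  have hrange : ∀ t t' : unitInterval, α t' < α t + 2 * Real.pi := by
    intro t t'
    by_contra! h
    obtain ⟨u, hu⟩ := mem_range_of_exists_le_of_exists_ge hα (c := α t + 2 * Real.pi)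
      ⟨t, by linarith⟩ ⟨t', h⟩
    have := hmod u t 1 (by rw [hu]; simp)
    rw [this] at hu
    linarith
  have hr0s : r 0 = s := by
    refine (polar_inj (O := O) (β := α 0) (β' := a) (hr0 0) hs ?_).1
    rw [← hfα, ← hp, ← hf0]; rfl
  obtain ⟨hr1s, m, hm⟩ : r 1 = s' ∧ ∃ k : ℤ, α 1 = b + 2 * Real.pi * k := by
    refine polar_inj (O := O) (hr0 1) hs' ?_
    rw [← hfα, ← hq, ← hf1]; rfl
  have hmain : StrictAnti α ∧ α 1 = b := by
    rcases hα.strictMono_of_inj_boundedOrder' hinj with hmn | han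
    · -- An increasing angle runs from `a + 2π` to `b + 2π`, and misses the ray at angle `φ`.
      exfalso
      have h01 : α 0 < α 1 := hmn (by exact_mod_cast zero_lt_one)
      have h10 := hrange 0 1
      have hm1 : m = 1 := by
        apply int_eq_of_lt <;> push_cast <;> linarith
      subst hm1
      obtain ⟨u, hu, ⟨t, ht, hft⟩⟩ := hmeet
      obtain ⟨-, l, hl⟩ := polar_inj (O := O) (β := α ⟨t, ht⟩) (hr0 ⟨t, ht⟩) hu
        ((hfα ⟨t, ht⟩).symm.trans hft)
      have ha0 : α 0 ≤ α ⟨t, ht⟩ := hmn.monotone ht.1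
      have ha1 : α ⟨t, ht⟩ ≤ α 1 := hmn.monotone ht.2
      push_cast at hm
      have : l = 1 := by
        apply int_eq_of_lt <;> push_cast <;> linarith
      subst this
      push_cast at hl
      linarith
    · refine ⟨han, ?_⟩
      have h01 : α 1 < α 0 := han (by exact_mod_cast zero_lt_one)
      have h10 := hrange 1 0
      have hm0 : m = 0 := by
        apply int_eq_of_lt <;> push_cast <;> linarith
      simpa [hm0] using hm
  obtain ⟨han, hα1⟩ := hmain
  -- Since `α` is a closed embedding, Tietze's theorem gives `ρ` with `ρ ∘ α = r`.
  obtain ⟨ρ, hρ⟩ := ContinuousMap.exists_extension' (hα.isClosedEmbedding hinj) ⟨r, hr⟩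
  have hρα : ∀ t, ρ (α t) = r t := fun t => congrFun hρ t
  refine ⟨ρ, ρ.continuous, fun β hβ => ?_, ?_, ?_, ?_⟩
  · obtain ⟨t, rfl⟩ := mem_range_of_exists_le_of_exists_ge hα (c := β)
      ⟨1, hα1 ▸ hβ.1⟩ ⟨0, hα0 ▸ hβ.2⟩
    rw [hρα]
    exact ⟨hr0 t, by rw [← hfα]; exact hgA t⟩
  · rintro _ ⟨t, ht, rfl⟩
    refine ⟨α ⟨t, ht⟩, ⟨?_, ?_⟩, ?_⟩
    · rw [← hα1]; exact han.antitone ht.2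
    · rw [← hα0]; exact han.antitone ht.1
    · rw [hρα]; exact hfα ⟨t, ht⟩
  · rw [← hα1, hρα, hr1s]
  · rw [← hα0, hρα, hr0s]

/-! ### Order of radial functions -/

/-- Continuous functions that differ at every point of an order-connected set keep their order. -/
theorem lt_of_lt_of_ne {f g : ℝ → ℝ} (hf : Continuous f) (hg : Continuous g) {S : Set ℝ}
    (hS : S.OrdConnected) (hne : ∀ x ∈ S, f x ≠ g x) {x y : ℝ} (hx : x ∈ S) (hy : y ∈ S)
    (h : f x < g x) : f y < g y := by
  by_contra! h'
  obtain ⟨z, hz, hfg⟩ := hS.isPreconnected.intermediate_value₂ hx hy hf.continuousOn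
    hg.continuousOn h.le h'
  exact hne z hz hfg

/-- The combinatorial core, with `P` the length of a turn, `R₁, …, R₄` the radii of the vertices and
`Fᵢⱼ` the radial function of `vᵢvⱼ`; the edge `v₁v₄` passes above the common point of `v₁v₃` and
`v₂v₄`. Only order and equality of radii matter, so the lemma also applies to the negatives of all
radial functions. -/
theorem no_common_radius_aux {P t₁ t₂ t₃ t₄ c R₁ R₂ R₃ R₄ : ℝ} {F₁₂ F₁₃ F₁₄ F₂₄ F₃₄ : ℝ → ℝ}
    (h12 : t₁ < t₂) (h23 : t₂ < t₃) (h34 : t₃ < t₄) (h41 : t₄ < t₁ + P)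
    (c12 : Continuous F₁₂) (c13 : Continuous F₁₃) (c14 : Continuous F₁₄) (c24 : Continuous F₂₄)
    (c34 : Continuous F₃₄)
    (e12 : F₁₂ t₂ = R₂ ∧ F₁₂ (t₁ + P) = R₁) (e13 : F₁₃ t₃ = R₃ ∧ F₁₃ (t₁ + P) = R₁)
    (e14 : F₁₄ t₄ = R₄ ∧ F₁₄ (t₁ + P) = R₁) (e24 : F₂₄ t₄ = R₄ ∧ F₂₄ (t₂ + P) = R₂)
    (e34 : F₃₄ t₄ = R₄ ∧ F₃₄ (t₃ + P) = R₃)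
    (n1 : ∀ x ∈ Ico t₄ (t₁ + P), F₁₃ x ≠ F₁₄ x) (n2 : ∀ x ∈ Ioc t₄ (t₁ + P), F₂₄ x ≠ F₁₄ x)
    (n3 : ∀ x ∈ Icc t₄ (t₁ + P), F₂₄ x ≠ F₁₂ x) (n4 : ∀ x ∈ Ico t₃ (t₁ + P), F₁₃ x ≠ F₁₂ x)
    (n5 : ∀ x ∈ Icc t₄ (t₁ + P), F₁₃ x ≠ F₃₄ x) (n6 : ∀ x ∈ Ioc t₄ (t₂ + P), F₂₄ x ≠ F₃₄ x)
    (n7 : ∀ x ∈ Icc t₄ (t₁ + P), F₁₂ x = F₃₄ x → ∀ y ∈ Icc t₂ t₃, F₁₂ y ≠ F₃₄ (y + P))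
    (hc : c ∈ Ioo t₄ (t₁ + P)) (hc13 : F₁₃ c < F₁₄ c) (hc24 : F₂₄ c < F₁₄ c) : False := by
  obtain ⟨hc1, hc2⟩ := hc
  have a13 : F₁₃ t₄ < R₄ := by
    rw [← e14.1]
    exact lt_of_lt_of_ne c13 c14 ordConnected_Ico n1 ⟨hc1.le, hc2⟩ ⟨le_rfl, h41⟩ hc13
  have b24 : F₂₄ (t₁ + P) < R₁ := by
    rw [← e14.2]
    exact lt_of_lt_of_ne c24 c14 ordConnected_Ioc n2 ⟨hc1, hc2.le⟩ ⟨h41, le_rfl⟩ hc24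
  have a12 : R₄ < F₁₂ t₄ := by
    rw [← e24.1]
    refine lt_of_lt_of_ne c24 c12 ordConnected_Icc n3 ⟨h41.le, le_rfl⟩ ⟨le_rfl, h41.le⟩ ?_
    rwa [e12.2]
  have u12 : R₃ < F₁₂ t₃ := by
    rw [← e13.1]
    exact lt_of_lt_of_ne c13 c12 ordConnected_Ico n4 ⟨h34.le, h41⟩ ⟨le_rfl, h34.trans h41⟩
      (a13.trans a12)
  have b34 : R₁ < F₃₄ (t₁ + P) := by
    rw [← e13.2]
    refine lt_of_lt_of_ne c13 c34 ordConnected_Icc n5 ⟨le_rfl, h41.le⟩ ⟨h41.le, le_rfl⟩ ?_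
    rwa [e34.1]
  have u34 : R₂ < F₃₄ (t₂ + P) := by
    rw [← e24.2]
    exact lt_of_lt_of_ne c24 c34 ordConnected_Ioc n6 ⟨h41, by linarith⟩ ⟨by linarith, le_rfl⟩
      (b24.trans b34)
  obtain ⟨x, hx, hxe⟩ := isPreconnected_Icc.intermediate_value₂ (s := Icc t₄ (t₁ + P))
    (right_mem_Icc.2 h41.le) (left_mem_Icc.2 h41.le) c12.continuousOn c34.continuousOn
    (by rw [e12.2]; exact b34.le) (by rw [e34.1]; exact a12.le)
  obtain ⟨y, hy, hye⟩ := isPreconnected_Icc.intermediate_value₂ (s := Icc t₂ t₃)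
    (f := F₁₂) (g := fun y => F₃₄ (y + P))
    (left_mem_Icc.2 h23.le) (right_mem_Icc.2 h23.le) c12.continuousOn
    (c34.comp (continuous_id.add continuous_const)).continuousOn
    (by rw [e12.1]; exact u34.le) (by rw [e34.2]; exact u12.le)
  exact n7 x hx hxe y hy hye

/-- The radial functions of `v₁v₃` and `v₂v₄` differ wherever both are defined. -/
theorem no_common_radius {P t₁ t₂ t₃ t₄ c R₁ R₂ R₃ R₄ : ℝ} {F₁₂ F₁₃ F₁₄ F₂₄ F₃₄ : ℝ → ℝ}
    (h12 : t₁ < t₂) (h23 : t₂ < t₃) (h34 : t₃ < t₄) (h41 : t₄ < t₁ + P)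
    (c12 : Continuous F₁₂) (c13 : Continuous F₁₃) (c14 : Continuous F₁₄) (c24 : Continuous F₂₄)
    (c34 : Continuous F₃₄)
    (e12 : F₁₂ t₂ = R₂ ∧ F₁₂ (t₁ + P) = R₁) (e13 : F₁₃ t₃ = R₃ ∧ F₁₃ (t₁ + P) = R₁)
    (e14 : F₁₄ t₄ = R₄ ∧ F₁₄ (t₁ + P) = R₁) (e24 : F₂₄ t₄ = R₄ ∧ F₂₄ (t₂ + P) = R₂)
    (e34 : F₃₄ t₄ = R₄ ∧ F₃₄ (t₃ + P) = R₃)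
    (n1 : ∀ x ∈ Ico t₄ (t₁ + P), F₁₃ x ≠ F₁₄ x) (n2 : ∀ x ∈ Ioc t₄ (t₁ + P), F₂₄ x ≠ F₁₄ x)
    (n3 : ∀ x ∈ Icc t₄ (t₁ + P), F₂₄ x ≠ F₁₂ x) (n4 : ∀ x ∈ Ico t₃ (t₁ + P), F₁₃ x ≠ F₁₂ x)
    (n5 : ∀ x ∈ Icc t₄ (t₁ + P), F₁₃ x ≠ F₃₄ x) (n6 : ∀ x ∈ Ioc t₄ (t₂ + P), F₂₄ x ≠ F₃₄ x)
    (n7 : ∀ x ∈ Icc t₄ (t₁ + P), F₁₂ x = F₃₄ x → ∀ y ∈ Icc t₂ t₃, F₁₂ y ≠ F₃₄ (y + P))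
    (hc : c ∈ Icc t₄ (t₁ + P)) : F₁₃ c ≠ F₂₄ c := by
  intro hce
  have hc1 : t₄ < c := by
    refine lt_of_le_of_ne hc.1 fun h => n1 t₄ ⟨le_rfl, h41⟩ ?_
    rw [e14.1, ← e24.1, h, hce]
  have hc2 : c < t₁ + P := by
    refine lt_of_le_of_ne hc.2 fun h => n2 (t₁ + P) ⟨h41, le_rfl⟩ ?_
    rw [e14.2, ← e13.2, ← h, hce]
  rcases lt_or_gt_of_ne (n1 c ⟨hc1.le, hc2⟩) with h | h
  · exact no_common_radius_aux h12 h23 h34 h41 c12 c13 c14 c24 c34 e12 e13 e14 e24 e34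
      n1 n2 n3 n4 n5 n6 n7 ⟨hc1, hc2⟩ h (hce ▸ h)
  · refine no_common_radius_aux (R₁ := -R₁) (R₂ := -R₂) (R₃ := -R₃) (R₄ := -R₄)
      (F₁₂ := fun x => -F₁₂ x) (F₁₃ := fun x => -F₁₃ x) (F₁₄ := fun x => -F₁₄ x)
      (F₂₄ := fun x => -F₂₄ x) (F₃₄ := fun x => -F₃₄ x)
      h12 h23 h34 h41 c12.neg c13.neg c14.neg c24.neg c34.neg
      ?_ ?_ ?_ ?_ ?_ ?_ ?_ ?_ ?_ ?_ ?_ ?_ ⟨hc1, hc2⟩ (neg_lt_neg h) (neg_lt_neg (hce ▸ h))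
    all_goals simpa only [neg_inj, ne_eq]

/-! ### Drawings -/

namespace SimpleDrawing

variable {n : ℕ}

/-- `arc_graph` for the edges of a generalized twisted drawing. -/
theorem edge_graph (D : SimpleDrawing n) {O d : Pt} {φ : ℝ} {θ R : Fin n → ℝ}
    (hGT : D.GenTwistedAt O d) (hLab : D.IsCCWLabeling O d φ θ)
    (hR : ∀ i, 0 < R i ∧ D.vtx i = polar O (R i) (θ i)) {i j : Fin n} (hij : i < j) :
    ∃ ρ : ℝ → ℝ, Continuous ρ ∧
      (∀ β ∈ Icc (θ j) (θ i + 2 * Real.pi), 0 < ρ β ∧ polar O (ρ β) β ∈ D.arc i j) ∧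
      (∀ x ∈ D.arc i j, ∃ β ∈ Icc (θ j) (θ i + 2 * Real.pi), x = polar O (ρ β) β) ∧
      ρ (θ j) = R j ∧ ρ (θ i + 2 * Real.pi) = R i := by
  obtain ⟨⟨hOD, hmono⟩, -, hmeet⟩ := hGT
  obtain ⟨⟨s, hs, rfl⟩, hθ, hIoo, -⟩ := hLab
  have hO : O ∉ D.arc i j := fun h => hOD (by
    simp only [drawingSet, mem_iUnion]
    exact ⟨i, j, hij.ne, h⟩)
  refine arc_graph (φ := φ) (D.arc_simple i j hij.ne) hO (fun d hd => hmono d hd i j hij.ne) ?_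
    (hIoo i).1 (hθ hij) (hIoo j).2 (hR i).1 (hR j).1 (hR i).2 (hR j).2
  obtain ⟨x, ⟨t, ht, rfl⟩, hx⟩ := hmeet i j hij.ne
  rw [smul_smul] at hx
  refine ⟨t * s, mul_pos (lt_of_le_of_ne ht ?_) hs, hx⟩
  rintro rfl
  apply hO
  simpa using hx

/-- Edges with a common vertex `i` have different radii at each angle `β` other than that of `i`. -/
theorem radius_ne (D : SimpleDrawing n) {O : Pt} {θ R : Fin n → ℝ}
    (hR : ∀ i, 0 < R i ∧ D.vtx i = polar O (R i) (θ i)) {i j k : Fin n}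
    (hij : i ≠ j) (hik : i ≠ k) (hjk : j ≠ k) {u v β : ℝ} (h1 : θ i < β)
    (h2 : β < θ i + 2 * Real.pi) (hu : 0 < u ∧ polar O u β ∈ D.arc i j)
    (hv : 0 < v ∧ polar O v β ∈ D.arc i k) : u ≠ v := by
  rintro rfl
  have hmem : polar O u β ∈ D.arc i j ∩ D.arc i k := ⟨hu.2, hv.2⟩
  rw [D.adj_inter i j k hij hik hjk, mem_singleton_iff, (hR i).2] at hmem
  obtain ⟨-, m, hm⟩ := polar_inj hu.1 (hR i).1 hmem
  have : m = 0 := by apply int_eq_of_lt <;> push_cast <;> linarith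
  subst this
  push_cast at hm
  linarith

end SimpleDrawing

/-- In a generalized twisted drawing of `K₄` with vertices labeled
counterclockwise around `O` and the ray `r` counterclockwise between `v₄` and `v₁`,
the edges `v₁v₃` and `v₂v₄` do not cross: their arcs are disjoint. -/
theorem stmt_0 (D : SimpleDrawing 4) (O d : Pt) (φ : ℝ) (θ : Fin 4 → ℝ)
    (hGT : D.GenTwistedAt O d) (hLab : D.IsCCWLabeling O d φ θ) :
    D.arc 0 2 ∩ D.arc 1 3 = ∅ := by
  have hpi := Real.two_pi_pos
  choose R hR using hLab.2.2.2
  have hR : ∀ i, 0 < R i ∧ D.vtx i = polar O (R i) (θ i) := hR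
  obtain ⟨F₁₂, c12, g12, -, e12⟩ := D.edge_graph hGT hLab hR (i := 0) (j := 1) (by decide)
  obtain ⟨F₁₃, c13, g13, s13, e13⟩ := D.edge_graph hGT hLab hR (i := 0) (j := 2) (by decide)
  obtain ⟨F₁₄, c14, g14, -, e14⟩ := D.edge_graph hGT hLab hR (i := 0) (j := 3) (by decide)
  obtain ⟨F₂₄, c24, g24, s24, e24⟩ := D.edge_graph hGT hLab hR (i := 1) (j := 3) (by decide)
  obtain ⟨F₃₄, c34, g34, -, e34⟩ := D.edge_graph hGT hLab hR (i := 2) (j := 3) (by decide)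
  have h12 : θ 0 < θ 1 := hLab.2.1 (by decide)
  have h23 : θ 1 < θ 2 := hLab.2.1 (by decide)
  have h34 : θ 2 < θ 3 := hLab.2.1 (by decide)
  have h41 : θ 3 < θ 0 + 2 * Real.pi := by
    linarith [(hLab.2.2.1 0).1, (hLab.2.2.1 3).2]
  rw [eq_empty_iff_forall_notMem]
  rintro x ⟨hx13, hx24⟩
  obtain ⟨β, hβ, hxβ⟩ := s13 x hx13
  obtain ⟨β', hβ', hxβ'⟩ := s24 x hx24
  obtain ⟨hF, k, hk⟩ := polar_inj (g13 β hβ).1 (g24 β' hβ').1 (hxβ.symm.trans hxβ')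
  have hk0 : k = 0 := by
    obtain ⟨_, _⟩ := hβ
    obtain ⟨_, _⟩ := hβ'
    apply int_eq_of_lt <;> push_cast <;> linarith
  obtain rfl : β = β' := by simpa [hk0] using hk
  refine no_common_radius h12 h23 h34 h41 c12 c13 c14 c24 c34 e12 e13 e14 e24 e34
    ?_ ?_ ?_ ?_ ?_ ?_ ?_ ⟨hβ'.1, hβ.2⟩ hF
  · rintro y ⟨h1, h2⟩
    exact D.radius_ne hR (i := 0) (j := 2) (k := 3) (by decide) (by decide) (by decide)
      (by linarith) (by linarith) (g13 y ⟨by linarith, by linarith⟩)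
      (g14 y ⟨by linarith, by linarith⟩)
  · rintro y ⟨h1, h2⟩
    exact D.radius_ne hR (i := 3) (j := 1) (k := 0) (by decide) (by decide) (by decide)
      (by linarith) (by linarith) (D.arc_symm 1 3 ▸ g24 y ⟨by linarith, by linarith⟩)
      (D.arc_symm 0 3 ▸ g14 y ⟨by linarith, by linarith⟩)
  · rintro y ⟨h1, h2⟩
    exact D.radius_ne hR (i := 1) (j := 3) (k := 0) (by decide) (by decide) (by decide)
      (by linarith) (by linarith) (g24 y ⟨by linarith, by linarith⟩)
      (D.arc_symm 0 1 ▸ g12 y ⟨by linarith, by linarith⟩)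
  · rintro y ⟨h1, h2⟩
    exact D.radius_ne hR (i := 0) (j := 2) (k := 1) (by decide) (by decide) (by decide)
      (by linarith) (by linarith) (g13 y ⟨by linarith, by linarith⟩)
      (g12 y ⟨by linarith, by linarith⟩)
  · rintro y ⟨h1, h2⟩
    exact D.radius_ne hR (i := 2) (j := 0) (k := 3) (by decide) (by decide) (by decide)
      (by linarith) (by linarith) (D.arc_symm 0 2 ▸ g13 y ⟨by linarith, by linarith⟩)
      (g34 y ⟨by linarith, by linarith⟩)
  · rintro y ⟨h1, h2⟩
    exact D.radius_ne hR (i := 3) (j := 1) (k := 2) (by decide) (by decide) (by decide)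
      (by linarith) (by linarith) (D.arc_symm 1 3 ▸ g24 y ⟨by linarith, by linarith⟩)
      (D.arc_symm 2 3 ▸ g34 y ⟨by linarith, by linarith⟩)
  · rintro y ⟨h1, h2⟩ hy z ⟨h3, h4⟩ hz
    obtain ⟨hy0, hy12⟩ := g12 y ⟨by linarith, by linarith⟩
    obtain ⟨-, hy34⟩ := g34 y ⟨by linarith, by linarith⟩
    obtain ⟨hz0, hz12⟩ := g12 z ⟨by linarith, by linarith⟩
    obtain ⟨-, hz34⟩ := g34 (z + 2 * Real.pi) ⟨by linarith, by linarith⟩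
    rw [← hy] at hy34
    rw [← hz, polar_add_two_pi] at hz34
    have heq := D.indep_inter 0 1 2 3 (by decide) (by decide) (by decide) (by decide) (by decide)
      (by decide) ⟨hy12, hy34⟩ ⟨hz12, hz34⟩
    -- Both angles are equal modulo `2π`, although `0 < y - z < 2π`.
    obtain ⟨-, m, hm⟩ := polar_inj hy0 hz0 heq
    have : m = 0 := by apply int_eq_of_lt <;> push_cast <;> linarith
    subst this
    push_cast at hm
    linarith
end

section
/- Every generalized twisted drawing of K_n contains a plane Hamiltonian path; that is, there exists an ordering w_1,…,w_n of the n vertices such that the n−1 edges w_1w_2, w_2w_3, …, w_{n−1}w_n pairwise do not cross. -/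
/-!
Centre the drawing at `0` with the given ray as the nonnegative real axis. By c-monotonicity each
edge is the graph of a distance function over the angles it occupies. Suppose first that no vertex
lies on the ray, and number the vertices by increasing angle in `(0, 2π)`. An edge `ij` with
`i < j` meets the ray, so it occupies exactly the angles outside the open sector between `i` and
`j` (`Pic.edge_shape`). Let `y i j` be the height at which it crosses the ray.

*Order on the ray.* Intermediate value arguments give two rules. For `i < j < k` the heights of
`ij`, `ik`, `jk` are monotone (`Core.g1`), as otherwise `ij` and `jk` would meet twice. For fixed
`i < l` the sign of `y i l - y i k` is the same for all `k` between them (`Core.sig`), as otherwise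
two independent edges would cross twice. Together they show that interleaving edges `ik` and `jl`,
`i < j < k < l`, never cross: `il` separates them (`Core.inter`). In the zigzag path
`x, x + m, x - 1, x + m - 1, …` modulo `n`, with `m = ⌊n/2⌋`, all pairs of edges without a common
end interleave, so the path is plane (`Core.zig_disj`).

*A vertex on the ray.* The definition allows a vertex `o` on the ray, but only one. The rules and
the zigzag path apply to the other `N` vertices, and `o` has to be inserted. The edge from `o` to
`i` leaves the ray on one of its two sides, and the vertices reached after the ray form an initial
segment (`OSys.amono`). The edges `ox` and `ab` are disjoint under simple conditions on heights
(`OSys.alpha`, `OSys.beta`). If more than half of the vertices are reached on one side, `o` can be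
placed in front of a zigzag path with a suitable start (`OSys.good_of_A`). In the remaining balanced
case `N = 2m`, take the first vertex `x` and, by symmetry, the last vertex `w` for which the
condition `okA` fails. Both are safe neighbours of `o`. If `x` or `w` is an end of the path, `o` is
attached there; if `w = x + m + 1`, it is inserted into the chord `xw`; `w > x + m + 1` is
impossible; and if `w ≤ x + m`, the chords between `x` and `w` all cross the ray on one side of
`o`, and `o` is inserted into the nearest of them (`OSys.good_special`).
-/

open Set

/-! ### Heights on the ray, and interleaving edges -/

/-- Two continuous functions that never agree keep their order along an interval. -/
theorem lt_of_ne_on {f g : ℝ → ℝ} {a b x y : ℝ} (hf : ContinuousOn f (Icc a b))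
    (hg : ContinuousOn g (Icc a b)) (hne : ∀ θ ∈ Icc a b, f θ ≠ g θ)
    (hx : x ∈ Icc a b) (hy : y ∈ Icc a b) (h : f x < g x) : f y < g y := by
  by_contra hc
  push Not at hc
  have hpc : IsPreconnected (Icc a b) := isPreconnected_Icc
  obtain ⟨θ, hθ, he⟩ := hpc.intermediate_value₂ hx hy hf hg h.le hc
  exact hne θ hθ he

/-- Two continuous functions that exchange their order agree strictly inside the interval. -/
theorem exists_eq_on {f g : ℝ → ℝ} {a b : ℝ} (hab : a ≤ b) (hf : ContinuousOn f (Icc a b))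
    (hg : ContinuousOn g (Icc a b))
    (h : (f a < g a ∧ g b < f b) ∨ (g a < f a ∧ f b < g b)) : ∃ θ, a < θ ∧ θ < b ∧ f θ = g θ := by
  have hpc : IsPreconnected (Icc a b) := isPreconnected_Icc
  have key : ∃ θ ∈ Icc a b, f θ = g θ := by
    rcases h with h | h
    · exact hpc.intermediate_value₂ (left_mem_Icc.2 hab) (right_mem_Icc.2 hab) hf hg h.1.le h.2.le
    · exact hpc.intermediate_value₂ (right_mem_Icc.2 hab) (left_mem_Icc.2 hab) hf hg h.2.le h.1.le
  obtain ⟨θ, hθ, he⟩ := key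
  refine ⟨θ, lt_of_le_of_ne hθ.1 ?_, lt_of_le_of_ne hθ.2 ?_, he⟩
  · rintro rfl; rcases h with h | h <;> linarith [h.1]
  · rintro rfl; rcases h with h | h <;> linarith [h.2]

/-- The set of angles occupied by the edge between the vertices at angles `τ i` and `τ j`: since
the edge meets the ray at angle `0 = P`, it avoids exactly the open sector between its ends. -/
def edom (P : ℝ) (τ : ℕ → ℝ) (i j : ℕ) : Set ℝ :=
  {θ | 0 ≤ θ ∧ θ ≤ P ∧ ((θ ≤ τ i ∧ θ ≤ τ j) ∨ (τ i ≤ θ ∧ τ j ≤ θ))}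

theorem edom_symm (P : ℝ) (τ : ℕ → ℝ) (i j : ℕ) : edom P τ i j = edom P τ j i := by
  ext θ; simp only [edom, mem_ofPred_eq]; tauto

/-- A generalized twisted drawing in polar coordinates, without vertices on the ray. Angles run over
`[0, P]`, where `0` and `P` both stand for the ray. Vertex `i` (for `i < N`) has angle `τ i` and
distance `h i` from the centre, and `F i j θ` is the distance from the centre of the point at angle
`θ ∈ edom P τ i j` on the edge `ij`. By `adj`, edges with a common end meet only there; by `indep`,
independent edges meet at most once, a meeting on the ray being visible at both `0` and `P`. -/
structure Core (N : ℕ) where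
  P : ℝ
  τ : ℕ → ℝ
  h : ℕ → ℝ
  F : ℕ → ℕ → ℝ → ℝ
  tpos : ∀ i, i < N → 0 < τ i
  tlt : ∀ i, i < N → τ i < P
  tmono : ∀ i j, i < j → j < N → τ i < τ j
  symm : ∀ i j, F i j = F j i
  cont : ∀ i j, i < N → j < N → i ≠ j → ContinuousOn (F i j) (edom P τ i j)
  per : ∀ i j, i < N → j < N → i ≠ j → F i j 0 = F i j P
  fend : ∀ i j, i < N → j < N → i ≠ j → F i j (τ i) = h i
  adj : ∀ i j k, i < N → j < N → k < N → i ≠ j → i ≠ k → j ≠ k → ∀ θ, θ ∈ edom P τ i j →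
    θ ∈ edom P τ i k → F i j θ = F i k θ → θ = τ i
  indep : ∀ i j k l, i < N → j < N → k < N → l < N → i ≠ j → k ≠ l → i ≠ k → i ≠ l → j ≠ k →
    j ≠ l → ∀ θ θ', θ ∈ edom P τ i j → θ ∈ edom P τ k l → θ' ∈ edom P τ i j →
    θ' ∈ edom P τ k l → F i j θ = F k l θ → F i j θ' = F k l θ' →
    θ = θ' ∨ (θ = 0 ∧ θ' = P) ∨ (θ = P ∧ θ' = 0)

namespace Core
variable {N : ℕ}

/-- The height at which the edge `ij` crosses the ray. -/
def y (S : Core N) (i j : ℕ) : ℝ := S.F i j 0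

/-- Reversal of all distances. Every statement about heights above has a dual about heights below. -/
def flip (S : Core N) : Core N where
  P := S.P
  τ := S.τ
  h := fun i => - S.h i
  F := fun i j θ => - S.F i j θ
  tpos := S.tpos
  tlt := S.tlt
  tmono := S.tmono
  symm := fun i j => by rw [S.symm]
  cont := fun i j hi hj hij => (S.cont i j hi hj hij).neg
  per := fun i j hi hj hij => by rw [S.per i j hi hj hij]
  fend := fun i j hi hj hij => by rw [S.fend i j hi hj hij]
  adj := fun i j k hi hj hk h1 h2 h3 θ ha hb he =>
    S.adj i j k hi hj hk h1 h2 h3 θ ha hb (neg_injective he)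
  indep := fun i j k l hi hj hk hl h1 h2 h3 h4 h5 h6 θ θ' a b c d e f =>
    S.indep i j k l hi hj hk hl h1 h2 h3 h4 h5 h6 θ θ' a b c d (neg_injective e) (neg_injective f)

/-- Reflection of all angles, which also reverses the numbering of the vertices. -/
def mirror (S : Core N) : Core N where
  P := S.P
  τ := fun i => S.P - S.τ (N - 1 - i)
  h := fun i => S.h (N - 1 - i)
  F := fun i j θ => S.F (N - 1 - i) (N - 1 - j) (S.P - θ)
  tpos := fun i hi => by linarith [S.tlt (N - 1 - i) (by omega)]
  tlt := fun i hi => by linarith [S.tpos (N - 1 - i) (by omega)]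
  tmono := fun i j hij hj => by linarith [S.tmono (N - 1 - j) (N - 1 - i) (by omega) (by omega)]
  symm := fun i j => by rw [S.symm]
  cont := fun i j hi hj hij => by
    refine (S.cont (N-1-i) (N-1-j) (by omega) (by omega) (by omega)).comp (by fun_prop) ?_
    rintro θ ⟨h1, h2, h3⟩
    refine ⟨by linarith, by linarith, ?_⟩
    rcases h3 with h | h
    · right; constructor <;> linarith [h.1, h.2]
    · left; constructor <;> linarith [h.1, h.2]
  per := fun i j hi hj hij => by
    simp [S.per (N-1-i) (N-1-j) (by omega) (by omega) (by omega)]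
  fend := fun i j hi hj hij => by
    simp [S.fend (N-1-i) (N-1-j) (by omega) (by omega) (by omega)]
  adj := fun i j k hi hj hk h1 h2 h3 θ ha hb he => by
    have := S.adj (N-1-i) (N-1-j) (N-1-k) (by omega) (by omega) (by omega) (by omega) (by omega)
      (by omega) (S.P - θ) ?_ ?_ he
    · linarith
    · obtain ⟨a, b, c⟩ := ha
      refine ⟨by linarith, by linarith, ?_⟩
      rcases c with h | h
      · right; constructor <;> linarith [h.1, h.2]
      · left; constructor <;> linarith [h.1, h.2]
    · obtain ⟨a, b, c⟩ := hb
      refine ⟨by linarith, by linarith, ?_⟩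
      rcases c with h | h
      · right; constructor <;> linarith [h.1, h.2]
      · left; constructor <;> linarith [h.1, h.2]
  indep := fun i j k l hi hj hk hl h1 h2 h3 h4 h5 h6 θ θ' a b c d e f => by
    have key : ∀ i j θ, θ ∈ edom S.P (fun i => S.P - S.τ (N - 1 - i)) i j →
        S.P - θ ∈ edom S.P S.τ (N - 1 - i) (N - 1 - j) := by
      rintro i j θ ⟨a, b, c⟩
      refine ⟨by linarith, by linarith, ?_⟩
      rcases c with h | h
      · right; constructor <;> linarith [h.1, h.2]
      · left; constructor <;> linarith [h.1, h.2]
    have := S.indep (N-1-i) (N-1-j) (N-1-k) (N-1-l) (by omega) (by omega) (by omega) (by omega)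
      (by omega) (by omega) (by omega) (by omega) (by omega) (by omega) (S.P - θ) (S.P - θ')
      (key _ _ _ a) (key _ _ _ b) (key _ _ _ c) (key _ _ _ d) e f
    rcases this with h | h | h
    · left; linarith
    · right; right; constructor <;> linarith [h.1, h.2]
    · right; left; constructor <;> linarith [h.1, h.2]

theorem flip_y (S : Core N) (i j : ℕ) : S.flip.y i j = - S.y i j := rfl

theorem y_symm (S : Core N) (i j : ℕ) : S.y i j = S.y j i := by unfold y; rw [S.symm]

theorem mirror_y (S : Core N) {i j : ℕ} (hi : i < N) (hj : j < N) (hij : i ≠ j) :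
    S.mirror.y i j = S.y (N - 1 - i) (N - 1 - j) := by
  show S.F (N - 1 - i) (N - 1 - j) (S.P - 0) = _
  rw [sub_zero, ← S.per _ _ (by omega) (by omega) (by omega)]; rfl

theorem fend' (S : Core N) {i j : ℕ} (hi : i < N) (hj : j < N) (hij : i ≠ j) :
    S.F i j (S.τ j) = S.h j := by
  rw [S.symm]; exact S.fend j i hj hi hij.symm

/-- Two edges at `i` keep their order on the part `[0, c]` of the plane just after the ray, as they
meet only in vertex `i`. -/
theorem cmpR (S : Core N) {i j k : ℕ} (hi : i < N) (hj : j < N) (hk : k < N) (h1 : i ≠ j)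
    (h2 : i ≠ k) (h3 : j ≠ k) {θ θ' c : ℝ} (hc : c < S.τ i) (hcj : c ≤ S.τ j) (hck : c ≤ S.τ k)
    (a : 0 ≤ θ) (b : θ ≤ c) (a' : 0 ≤ θ') (b' : θ' ≤ c) (hlt : S.F i j θ < S.F i k θ) :
    S.F i j θ' < S.F i k θ' := by
  have hP := S.tlt i hi
  have s1 : Icc 0 c ⊆ edom S.P S.τ i j := fun x hx =>
    ⟨hx.1, by linarith [hx.2], Or.inl ⟨by linarith [hx.2], by linarith [hx.2]⟩⟩
  have s2 : Icc 0 c ⊆ edom S.P S.τ i k := fun x hx =>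
    ⟨hx.1, by linarith [hx.2], Or.inl ⟨by linarith [hx.2], by linarith [hx.2]⟩⟩
  refine lt_of_ne_on ((S.cont i j hi hj h1).mono s1) ((S.cont i k hi hk h2).mono s2) ?_
    ⟨a, b⟩ ⟨a', b'⟩ hlt
  intro x hx he
  have := S.adj i j k hi hj hk h1 h2 h3 x (s1 hx) (s2 hx) he
  linarith [hx.2]

/-- The analogue of `cmpR` on the part `[c, P]` just before the ray. -/
theorem cmpL (S : Core N) {i j k : ℕ} (hi : i < N) (hj : j < N) (hk : k < N) (h1 : i ≠ j)
    (h2 : i ≠ k) (h3 : j ≠ k) {θ θ' c : ℝ} (hc : S.τ i < c) (hcj : S.τ j ≤ c) (hck : S.τ k ≤ c)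
    (a : c ≤ θ) (b : θ ≤ S.P) (a' : c ≤ θ') (b' : θ' ≤ S.P) (hlt : S.F i j θ < S.F i k θ) :
    S.F i j θ' < S.F i k θ' := by
  have hP := S.tpos i hi
  have s1 : Icc c S.P ⊆ edom S.P S.τ i j := fun x hx =>
    ⟨by linarith [hx.1], hx.2, Or.inr ⟨by linarith [hx.1], by linarith [hx.1]⟩⟩
  have s2 : Icc c S.P ⊆ edom S.P S.τ i k := fun x hx =>
    ⟨by linarith [hx.1], hx.2, Or.inr ⟨by linarith [hx.1], by linarith [hx.1]⟩⟩
  refine lt_of_ne_on ((S.cont i j hi hj h1).mono s1) ((S.cont i k hi hk h2).mono s2) ?_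
    ⟨a, b⟩ ⟨a', b'⟩ hlt
  intro x hx he
  have := S.adj i j k hi hj hk h1 h2 h3 x (s1 hx) (s2 hx) he
  linarith [hx.1]

/-- The order of two edges at `i` on the ray is still their order after the ray. -/
theorem right_lt (S : Core N) {i j k : ℕ} (hi : i < N) (hj : j < N) (hk : k < N) (h1 : i ≠ j)
    (h2 : i ≠ k) (h3 : j ≠ k) {θ : ℝ} (h0 : 0 ≤ θ) (hc : θ < S.τ i) (hcj : θ ≤ S.τ j)
    (hck : θ ≤ S.τ k) (hlt : S.y i j < S.y i k) : S.F i j θ < S.F i k θ :=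
  S.cmpR hi hj hk h1 h2 h3 hc hcj hck le_rfl h0 h0 le_rfl hlt

/-- The order of two edges at `i` on the ray is also their order before the ray. -/
theorem left_lt (S : Core N) {i j k : ℕ} (hi : i < N) (hj : j < N) (hk : k < N) (h1 : i ≠ j)
    (h2 : i ≠ k) (h3 : j ≠ k) {θ : ℝ} (h0 : θ ≤ S.P) (hc : S.τ i < θ) (hcj : S.τ j ≤ θ)
    (hck : S.τ k ≤ θ) (hlt : S.y i j < S.y i k) : S.F i j θ < S.F i k θ := by
  refine S.cmpL hi hj hk h1 h2 h3 hc hcj hck h0 le_rfl le_rfl h0 ?_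
  rw [← S.per i j hi hj h1, ← S.per i k hi hk h2]; exact hlt

theorem y_ne (S : Core N) {i j k : ℕ} (hi : i < N) (hj : j < N) (hk : k < N) (h1 : i ≠ j)
    (h2 : i ≠ k) (h3 : j ≠ k) : S.y i j ≠ S.y i k := by
  intro he
  have a := S.tpos i hi
  have b := S.tpos j hj
  have c := S.tpos k hk
  have d := S.tlt i hi
  have := S.adj i j k hi hj hk h1 h2 h3 0 ⟨le_rfl, by linarith, Or.inl ⟨a.le, b.le⟩⟩
    ⟨le_rfl, by linarith, Or.inl ⟨a.le, c.le⟩⟩ he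
  linarith

/-- The three edges of a triangle `i < j < k` cross the ray monotonically in the order `ij`, `ik`,
`jk`. Otherwise `ij` and `jk`, which meet only in `j`, would have one order just after the ray and
the other one just before it. -/
theorem g1 (S : Core N) {i j k : ℕ} (hij : i < j) (hjk : j < k) (hk : k < N)
    (h : S.y i j < S.y i k) : S.y i k < S.y j k := by
  have hi : i < N := by omega
  have hj : j < N := by omega
  by_contra hc
  have hne : S.y k i ≠ S.y k j := S.y_ne hk hi hj (by omega) (by omega) (by omega)
  have hc' : S.y k j < S.y k i := by
    rw [S.y_symm k j, S.y_symm k i] at *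
    exact lt_of_le_of_ne (not_lt.1 hc) hne.symm
  have tij := S.tmono i j hij hj
  have tjk := S.tmono j k hjk hk
  have ti := S.tpos i hi
  have tk := S.tlt k hk
  -- `jk` passes below `i`, and `ij` passes below `k`
  have e1 := S.right_lt hk hj hi (by omega) (by omega) (by omega) ti.le (by linarith)
    tij.le le_rfl hc'
  have e2 := S.left_lt hi hj hk (by omega) (by omega) (by omega) tk.le (by linarith)
    tjk.le le_rfl h
  rw [S.fend' hk hi (by omega), S.symm k j, ← S.fend' hj hi (by omega)] at e1
  rw [S.fend' hi hk (by omega), S.symm i j, ← S.fend' hj hk (by omega)] at e2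
  have e3 := S.cmpR (θ' := 0) hj hk hi (by omega) (by omega) (by omega) tij (by linarith) (le_refl _)
    ti.le le_rfl le_rfl ti.le e1
  have e4 := S.cmpL (θ' := S.P) hj hi hk (by omega) (by omega) (by omega) tjk (by linarith)
    (le_refl _) le_rfl tk.le tk.le le_rfl e2
  rw [← S.per j i hj hi (by omega), ← S.per j k hj hk (by omega)] at e4
  linarith

theorem g1' (S : Core N) {i j k : ℕ} (hij : i < j) (hjk : j < k) (hk : k < N)
    (h : S.y i k < S.y i j) : S.y j k < S.y i k := by
  have := S.flip.g1 hij hjk hk (by simpa [flip_y] using h)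
  simpa [flip_y] using this

/-- If `il` crossed the ray between `ij` and `ik`, then `ij` and `kl` would cross twice: once in the
sector between `j` and `k`, and once near the ray, in the sector between `l` and `i`. -/
theorem sig_aux (S : Core N) {i j k l : ℕ} (hij : i < j) (hjk : j < k) (hkl : k < l) (hl : l < N)
    (h : S.y i j < S.y i l) : ¬ S.y i l < S.y i k := by
  intro h'
  have hi : i < N := by omega
  have hj : j < N := by omega
  have hk : k < N := by omega
  have tij := S.tmono i j hij hj
  have tjk := S.tmono j k hjk hk
  have tkl := S.tmono k l hkl hl
  have ti := S.tpos i hi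
  have tl := S.tlt l hl
  have kl_il : S.y l k < S.y l i := by
    rw [S.y_symm l k, S.y_symm l i]; exact S.g1' (by omega) hkl hl h'
  have il_jl : S.y l i < S.y l j := by
    rw [S.y_symm l i, S.y_symm l j]; exact S.g1 hij (by omega) hl h
  have kl_jl : S.y l k < S.y l j := kl_il.trans il_jl
  have ij_ik : S.y i j < S.y i k := h.trans h'
  -- `kl` passes below `i` and `ij` passes below `l`: a common point around the ray
  have a1 := S.right_lt hl hk hi (by omega) (by omega) (by omega) ti.le (by linarith)
    (by linarith) le_rfl kl_il
  have a2 := S.left_lt hi hj hl (by omega) (by omega) (by omega) tl.le (by linarith)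
    (by linarith) le_rfl h
  rw [S.fend' hl hi (by omega), S.symm l k, ← S.fend i j hi hj (by omega)] at a1
  rw [S.fend' hi hl (by omega), ← S.fend' hk hl (by omega)] at a2
  -- `kl` passes below `j` and `ij` passes below `k`: another one
  have b1 := S.right_lt hl hk hj (by omega) (by omega) (by omega) (S.tpos j hj).le (by linarith)
    (by linarith) le_rfl kl_jl
  have b2 := S.left_lt hi hj hk (by omega) (by omega) (by omega) (S.tlt k hk).le (by linarith)
    (by linarith) le_rfl ij_ik
  rw [S.fend' hl hj (by omega), S.symm l k, ← S.fend' hi hj (by omega)] at b1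
  rw [S.fend' hi hk (by omega), ← S.fend k l hk hl (by omega)] at b2
  have sR : Icc 0 (S.τ i) ⊆ edom S.P S.τ i j ∩ edom S.P S.τ k l := fun x hx =>
    ⟨⟨hx.1, by linarith [hx.2], Or.inl ⟨by linarith [hx.2], by linarith [hx.2]⟩⟩,
     ⟨hx.1, by linarith [hx.2], Or.inl ⟨by linarith [hx.2], by linarith [hx.2]⟩⟩⟩
  have sL : Icc (S.τ l) S.P ⊆ edom S.P S.τ i j ∩ edom S.P S.τ k l := fun x hx =>
    ⟨⟨by linarith [hx.1], hx.2, Or.inr ⟨by linarith [hx.1], by linarith [hx.1]⟩⟩,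
     ⟨by linarith [hx.1], hx.2, Or.inr ⟨by linarith [hx.1], by linarith [hx.1]⟩⟩⟩
  have sM : Icc (S.τ j) (S.τ k) ⊆ edom S.P S.τ i j ∩ edom S.P S.τ k l := fun x hx =>
    ⟨⟨by linarith [hx.1], by linarith [hx.2], Or.inr ⟨by linarith [hx.1], by linarith [hx.1]⟩⟩,
     ⟨by linarith [hx.1], by linarith [hx.2], Or.inl ⟨by linarith [hx.2], by linarith [hx.2]⟩⟩⟩
  have c1 := S.cont i j hi hj (by omega)
  have c2 := S.cont k l hk hl (by omega)
  obtain ⟨θ', h1, h2, h3⟩ := exists_eq_on tjk.le (c1.mono fun x hx => (sM hx).1)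
    (c2.mono fun x hx => (sM hx).2) (Or.inr ⟨b1, b2⟩)
  have fin : ∃ θ, (θ ∈ Icc 0 (S.τ i) ∨ θ ∈ Icc (S.τ l) S.P) ∧ S.F i j θ = S.F k l θ := by
    by_contra hcon
    push Not at hcon
    have r := lt_of_ne_on (c2.mono fun x hx => (sR hx).2) (c1.mono fun x hx => (sR hx).1)
      (fun θ hθ => (hcon θ (Or.inl hθ)).symm) ⟨ti.le, le_rfl⟩ ⟨le_rfl, ti.le⟩ a1
    have q := lt_of_ne_on (c1.mono fun x hx => (sL hx).1) (c2.mono fun x hx => (sL hx).2)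
      (fun θ hθ => hcon θ (Or.inr hθ)) ⟨le_rfl, tl.le⟩ ⟨tl.le, le_rfl⟩ a2
    rw [← S.per i j hi hj (by omega), ← S.per k l hk hl (by omega)] at q
    exact lt_asymm r q
  obtain ⟨θ, hθ, he⟩ := fin
  have mθ : θ ∈ edom S.P S.τ i j ∩ edom S.P S.τ k l := by
    rcases hθ with hθ | hθ
    exacts [sR hθ, sL hθ]
  have mθ' := sM ⟨h1.le, h2.le⟩
  have tlt := S.tlt k hk
  have tps := S.tpos j hj
  rcases S.indep i j k l hi hj hk hl (by omega) (by omega) (by omega) (by omega) (by omega)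
    (by omega) θ θ' mθ.1 mθ.2 mθ'.1 mθ'.2 he h3 with e | e | e
  · rcases hθ with hθ | hθ
    · linarith [hθ.2]
    · linarith [hθ.1]
  · linarith [e.2]
  · linarith [e.2]

/-- For `i < k < l`, whether `ik` crosses the ray below `il` does not depend on `k`. -/
theorem sig (S : Core N) {i j k l : ℕ} (hij : i < j) (hik : i < k) (hjl : j < l) (hkl : k < l)
    (hl : l < N) (h : S.y i j < S.y i l) : S.y i k < S.y i l := by
  rcases lt_trichotomy j k with hjk | rfl | hjk
  · exact lt_of_le_of_ne (not_lt.1 (S.sig_aux hij hjk hkl hl h))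
      (S.y_ne (by omega) (by omega) hl (by omega) (by omega) (by omega))
  · exact h
  · by_contra hc
    have hne : S.y i k ≠ S.y i l := S.y_ne (by omega) (by omega) hl (by omega) (by omega) (by omega)
    have := S.flip.sig_aux hik hjk hjl hl
      (by simpa [flip_y] using lt_of_le_of_ne (not_lt.1 hc) hne.symm)
    simp [flip_y] at this
    linarith

theorem sig' (S : Core N) {i j k l : ℕ} (hij : i < j) (hik : i < k) (hjl : j < l) (hkl : k < l)
    (hl : l < N) (h : S.y i l < S.y i j) : S.y i l < S.y i k := by
  have := S.flip.sig hij hik hjl hkl hl (by simpa [flip_y] using h)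
  simpa [flip_y] using this

/-- The edges `ij` and `kl` have no common point. -/
def Disj (S : Core N) (i j k l : ℕ) : Prop :=
  ∀ θ, θ ∈ edom S.P S.τ i j → θ ∈ edom S.P S.τ k l → S.F i j θ ≠ S.F k l θ

theorem Disj.swap {S : Core N} {i j k l : ℕ} (h : S.Disj i j k l) : S.Disj k l i j :=
  fun θ a b e => h θ b a e.symm

theorem Disj.left {S : Core N} {i j k l : ℕ} (h : S.Disj i j k l) : S.Disj j i k l :=
  fun θ a b e => h θ (edom_symm S.P S.τ i j ▸ a) b (by rw [S.symm i j]; exact e)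

theorem inter_aux (S : Core N) {i j k l : ℕ} (hij : i < j) (hjk : j < k) (hkl : k < l)
    (hl : l < N) (h : S.y i j < S.y i l) : S.Disj i k j l := by
  have hi : i < N := by omega
  have hj : j < N := by omega
  have hk : k < N := by omega
  have tij := S.tmono i j hij hj
  have tjk := S.tmono j k hjk hk
  have tkl := S.tmono k l hkl hl
  have ti := S.tpos i hi
  have tl := S.tlt l hl
  have ik_il := S.sig hij (by omega) (by omega) hkl hl h
  have il_jl : S.y l i < S.y l j := by
    rw [S.y_symm l i, S.y_symm l j]; exact S.g1 hij (by omega) hl h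
  rintro θ ⟨h0, hP, h1⟩ ⟨-, -, h2⟩
  apply ne_of_lt
  rcases h1 with h1 | h1 <;> rcases h2 with h2 | h2
  · have b : S.F i l θ < S.F j l θ := by
      rw [S.symm i l, S.symm j l]
      exact S.right_lt hl hi hj (by omega) (by omega) (by omega) h0 (by linarith) h1.1 h2.1 il_jl
    rcases h1.1.lt_or_eq with c | c
    · exact (S.right_lt hi hk hl (by omega) (by omega) (by omega) h0 c h1.2 h2.2 ik_il).trans b
    · rw [c, S.fend i k hi hk (by omega), ← S.fend i l hi hl (by omega), ← c]; exact b
  · linarith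
  · linarith
  · have b : S.F i k θ < S.F i l θ :=
      S.left_lt hi hk hl (by omega) (by omega) (by omega) hP (by linarith) h1.2 h2.2 ik_il
    rcases h2.2.lt_or_eq with c | c
    · rw [S.symm i l] at b
      rw [S.symm j l]
      exact b.trans (S.left_lt hl hi hj (by omega) (by omega) (by omega) hP c h1.1 h2.1 il_jl)
    · rw [← c, S.fend' hj hl (by omega), ← S.fend' hi hl (by omega), c]; exact b

/-- Interleaving edges do not cross: for `i < j < k < l` the edge `il` separates `ik` from `jl` at
all angles the latter two share. -/
theorem inter (S : Core N) {i j k l : ℕ} (hij : i < j) (hjk : j < k) (hkl : k < l)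
    (hl : l < N) : S.Disj i k j l := by
  have hne : S.y i j ≠ S.y i l :=
    S.y_ne (by omega) (by omega) hl (by omega) (by omega) (by omega)
  rcases hne.lt_or_gt with h | h
  · exact S.inter_aux hij hjk hkl hl h
  · intro θ a b e
    refine S.flip.inter_aux hij hjk hkl hl (by simpa [flip_y] using h) θ a b ?_
    show - _ = - _
    rw [e]

end Core

/-! ### A vertex on the ray -/

/-- The set of angles occupied by the edge from a vertex on the ray to vertex `i`: the sector after
the ray when `A i` holds, and the sector before the ray otherwise. -/
def odom (P : ℝ) (τ : ℕ → ℝ) (A : ℕ → Prop) (i : ℕ) : Set ℝ :=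
  {θ | 0 ≤ θ ∧ θ ≤ P ∧ (A i → θ ≤ τ i) ∧ (¬ A i → τ i ≤ θ)}

/-- A `Core` together with one further vertex `o` on the ray, at height `u`. The predicate `A i`
says that the edge `oi` leaves the ray in the direction of increasing angles, and `G i θ` is the
distance from the centre of its point at angle `θ ∈ odom P τ A i`. -/
structure OSys (N : ℕ) extends Core N where
  A : ℕ → Prop
  u : ℝ
  G : ℕ → ℝ → ℝ
  contO : ∀ i, i < N → ContinuousOn (G i) (odom P τ A i)
  Gend : ∀ i, i < N → G i (τ i) = h i
  GA : ∀ i, i < N → A i → G i 0 = u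
  GB : ∀ i, i < N → ¬ A i → G i P = u
  o_ne : ∀ i j, i < N → j < N → i ≠ j → F i j 0 ≠ u
  adjO : ∀ i j, i < N → j < N → i ≠ j → ∀ θ, θ ∈ odom P τ A i → θ ∈ odom P τ A j →
    G i θ = G j θ → θ = 0 ∨ θ = P
  adjI : ∀ i j, i < N → j < N → i ≠ j → ∀ θ, θ ∈ odom P τ A i → θ ∈ edom P τ i j →
    G i θ = F i j θ → θ = τ i
  indepO : ∀ i j k, i < N → j < N → k < N → i ≠ j → i ≠ k → j ≠ k → ∀ θ θ',
    θ ∈ odom P τ A i → θ ∈ edom P τ j k → θ' ∈ odom P τ A i → θ' ∈ edom P τ j k →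
    G i θ = F j k θ → G i θ' = F j k θ' → θ = θ'

namespace OSys
variable {N : ℕ}

/-- Reversal of all distances. -/
def flip (S : OSys N) : OSys N where
  toCore := S.toCore.flip
  A := S.A
  u := - S.u
  G := fun i θ => - S.G i θ
  contO := fun i hi => (S.contO i hi).neg
  Gend := fun i hi => by
    show - S.G i (S.τ i) = - S.h i
    rw [S.Gend i hi]
  GA := fun i hi h => by rw [S.GA i hi h]
  GB := fun i hi h => by
    show - S.G i S.P = _
    rw [S.GB i hi h]
  o_ne := fun i j hi hj hij he => S.o_ne i j hi hj hij (neg_injective he)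
  adjO := fun i j hi hj hij θ a b e => S.adjO i j hi hj hij θ a b (neg_injective e)
  adjI := fun i j hi hj hij θ a b e => S.adjI i j hi hj hij θ a b (neg_injective e)
  indepO := fun i j k hi hj hk h1 h2 h3 θ θ' a b c d e f =>
    S.indepO i j k hi hj hk h1 h2 h3 θ θ' a b c d (neg_injective e) (neg_injective f)

theorem edom_mirror {P : ℝ} {τ : ℕ → ℝ} {i j : ℕ} {θ : ℝ}
    (h : θ ∈ edom P (fun i => P - τ (N - 1 - i)) i j) :
    P - θ ∈ edom P τ (N - 1 - i) (N - 1 - j) := by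
  obtain ⟨a, b, c⟩ := h
  refine ⟨by linarith, by linarith, ?_⟩
  rcases c with h | h
  · right; constructor <;> linarith [h.1, h.2]
  · left; constructor <;> linarith [h.1, h.2]

theorem odom_mirror {P : ℝ} {τ : ℕ → ℝ} {A : ℕ → Prop} {i : ℕ} {θ : ℝ}
    (h : θ ∈ odom P (fun i => P - τ (N - 1 - i)) (fun i => ¬ A (N - 1 - i)) i) :
    P - θ ∈ odom P τ A (N - 1 - i) := by
  obtain ⟨a, b, c, d⟩ := h
  refine ⟨by linarith, by linarith, fun h => ?_, fun h => ?_⟩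
  · linarith [d (not_not.2 h)]
  · linarith [c h]

/-- Reflection of all angles; it exchanges the two directions in which an edge can leave `o`. -/
def mirror (S : OSys N) : OSys N where
  toCore := S.toCore.mirror
  A := fun i => ¬ S.A (N - 1 - i)
  u := S.u
  G := fun i θ => S.G (N - 1 - i) (S.P - θ)
  contO := fun i hi => (S.contO (N - 1 - i) (by omega)).comp (by fun_prop)
    fun θ hθ => odom_mirror hθ
  Gend := fun i hi => by
    show S.G _ (S.P - (S.P - _)) = _
    rw [sub_sub_cancel, S.Gend _ (by omega)]; rfl
  GA := fun i hi h => by rw [sub_zero, S.GB _ (by omega) h]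
  GB := fun i hi h => by
    show S.G _ (S.P - S.P) = _
    rw [sub_self, S.GA _ (by omega) (not_not.1 h)]
  o_ne := fun i j hi hj hij => by
    rw [show S.toCore.mirror.F i j 0 = S.toCore.mirror.y i j from rfl,
      S.toCore.mirror_y hi hj hij]
    exact S.o_ne _ _ (by omega) (by omega) (by omega)
  adjO := fun i j hi hj hij θ a b e => by
    rcases S.adjO (N-1-i) (N-1-j) (by omega) (by omega) (by omega) (S.P - θ) (odom_mirror a)
      (odom_mirror b) e with h | h
    · right; show θ = S.P; linarith
    · left; linarith
  adjI := fun i j hi hj hij θ a b e => by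
    have := S.adjI (N-1-i) (N-1-j) (by omega) (by omega) (by omega) (S.P - θ) (odom_mirror a)
      (edom_mirror b) e
    show θ = S.P - _
    linarith
  indepO := fun i j k hi hj hk h1 h2 h3 θ θ' a b c d e f => by
    have := S.indepO (N-1-i) (N-1-j) (N-1-k) (by omega) (by omega) (by omega) (by omega) (by omega)
      (by omega) (S.P - θ) (S.P - θ') (odom_mirror a) (edom_mirror b) (odom_mirror c)
      (edom_mirror d) e f
    linarith

theorem flip_y (S : OSys N) (i j : ℕ) : S.flip.y i j = - S.y i j := rfl
theorem flip_u (S : OSys N) : S.flip.u = - S.u := rfl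
theorem flip_A (S : OSys N) : S.flip.A = S.A := rfl
theorem mirror_u (S : OSys N) : S.mirror.u = S.u := rfl
theorem mirror_A (S : OSys N) (i : ℕ) : S.mirror.A i ↔ ¬ S.A (N - 1 - i) := Iff.rfl
theorem mirror_y (S : OSys N) {i j : ℕ} (hi : i < N) (hj : j < N) (hij : i ≠ j) :
    S.mirror.y i j = S.y (N - 1 - i) (N - 1 - j) := S.toCore.mirror_y hi hj hij

/-- The edges `ox` and `ab` have no common point. -/
def DisjO (S : OSys N) (x a b : ℕ) : Prop :=
  ∀ θ, θ ∈ odom S.P S.τ S.A x → θ ∈ edom S.P S.τ a b → S.G x θ ≠ S.F a b θ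

theorem DisjO.swap {S : OSys N} {x a b : ℕ} (h : S.DisjO x a b) : S.DisjO x b a :=
  fun θ p q e => h θ p (edom_symm S.P S.τ b a ▸ q) (by rw [S.symm a b]; exact e)

theorem flip_DisjO {S : OSys N} {x a b : ℕ} (h : S.flip.DisjO x a b) : S.DisjO x a b :=
  fun θ p q e => h θ p q (by show - _ = - _; rw [e])

theorem mirror_DisjO {S : OSys N} {x a b : ℕ} (hx : x < N) (ha : a < N) (hb : b < N)
    (h : S.mirror.DisjO (N - 1 - x) (N - 1 - a) (N - 1 - b)) : S.DisjO x a b := by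
  have ex : N - 1 - (N - 1 - x) = x := by omega
  have ea : N - 1 - (N - 1 - a) = a := by omega
  have eb : N - 1 - (N - 1 - b) = b := by omega
  intro θ p q e
  refine h (S.P - θ) ?_ ?_ ?_
  · obtain ⟨p1, p2, p3, p4⟩ := p
    refine ⟨by linarith, show S.P - θ ≤ S.P by linarith, fun h => ?_, fun h => ?_⟩
    · show _ ≤ S.P - S.τ _
      rw [mirror_A, ex] at h
      rw [ex]; linarith [p4 h]
    · show S.P - S.τ _ ≤ _
      rw [mirror_A, ex, not_not] at h
      rw [ex]; linarith [p3 h]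
  · obtain ⟨q1, q2, q3⟩ := q
    refine ⟨by linarith, show S.P - θ ≤ S.P by linarith, ?_⟩
    show (_ ≤ S.P - S.τ _ ∧ _ ≤ S.P - S.τ _) ∨ (S.P - S.τ _ ≤ _ ∧ S.P - S.τ _ ≤ _)
    rw [ea, eb]
    rcases q3 with h | h
    · right; constructor <;> linarith [h.1, h.2]
    · left; constructor <;> linarith [h.1, h.2]
  · show S.G _ (S.P - (S.P - θ)) = S.F _ _ (S.P - (S.P - θ))
    rw [ex, ea, eb, sub_sub_cancel]; exact e

theorem y_ne_u (S : OSys N) {i j : ℕ} (hi : i < N) (hj : j < N) (hij : i ≠ j) : S.y i j ≠ S.u :=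
  S.o_ne i j hi hj hij

theorem Fend (S : OSys N) {i j : ℕ} (hi : i < N) (hj : j < N) (hij : i ≠ j) :
    S.F i j (S.τ i) = S.G i (S.τ i) := by
  rw [S.fend i j hi hj hij, S.Gend i hi]

theorem Fend' (S : OSys N) {i j : ℕ} (hi : i < N) (hj : j < N) (hij : i ≠ j) :
    S.F i j (S.τ j) = S.G j (S.τ j) := by
  rw [S.fend' hi hj hij, S.Gend j hj]

/-- If `o` is below the crossing of `ij` with the ray, then `oi` stays below `ij` in the sector
after the ray, up to their common end `i`. -/
theorem oR (S : OSys N) {i j : ℕ} (hi : i < N) (hj : j < N) (hij : i ≠ j) (hA : S.A i) {θ : ℝ}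
    (h0 : 0 ≤ θ) (h1 : θ < S.τ i) (h2 : θ ≤ S.τ j) (h : S.u < S.y i j) : S.G i θ < S.F i j θ := by
  have hP := S.tlt i hi
  have s1 : Icc 0 θ ⊆ odom S.P S.τ S.A i := fun x hx =>
    ⟨hx.1, by linarith [hx.2], fun _ => by linarith [hx.2], fun h => absurd hA h⟩
  have s2 : Icc 0 θ ⊆ edom S.P S.τ i j := fun x hx =>
    ⟨hx.1, by linarith [hx.2], Or.inl ⟨by linarith [hx.2], by linarith [hx.2]⟩⟩
  refine lt_of_ne_on (x := 0) ((S.contO i hi).mono s1) ((S.cont i j hi hj hij).mono s2) ?_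
    ⟨le_rfl, h0⟩ ⟨h0, le_rfl⟩ ?_
  · intro x hx he
    have := S.adjI i j hi hj hij x (s1 hx) (s2 hx) he
    linarith [hx.2]
  · rw [S.GA i hi hA]; exact h

theorem oR' (S : OSys N) {i j : ℕ} (hi : i < N) (hj : j < N) (hij : i ≠ j) (hA : S.A i) {θ : ℝ}
    (h0 : 0 ≤ θ) (h1 : θ < S.τ i) (h2 : θ ≤ S.τ j) (h : S.y i j < S.u) : S.F i j θ < S.G i θ :=
  neg_lt_neg_iff.1 (S.flip.oR hi hj hij hA h0 h1 h2 (neg_lt_neg h))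

/-- The analogue of `oR` in the sector before the ray. -/
theorem oL (S : OSys N) {i j : ℕ} (hi : i < N) (hj : j < N) (hij : i ≠ j) (hA : ¬ S.A i) {θ : ℝ}
    (h0 : θ ≤ S.P) (h1 : S.τ i < θ) (h2 : S.τ j ≤ θ) (h : S.u < S.y i j) :
    S.G i θ < S.F i j θ := by
  have hP := S.tpos i hi
  have s1 : Icc θ S.P ⊆ odom S.P S.τ S.A i := fun x hx =>
    ⟨by linarith [hx.1], hx.2, fun h => absurd h hA, fun _ => by linarith [hx.1]⟩
  have s2 : Icc θ S.P ⊆ edom S.P S.τ i j := fun x hx =>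
    ⟨by linarith [hx.1], hx.2, Or.inr ⟨by linarith [hx.1], by linarith [hx.1]⟩⟩
  refine lt_of_ne_on (x := S.P) ((S.contO i hi).mono s1) ((S.cont i j hi hj hij).mono s2) ?_
    ⟨h0, le_rfl⟩ ⟨le_rfl, h0⟩ ?_
  · intro x hx he
    have := S.adjI i j hi hj hij x (s1 hx) (s2 hx) he
    linarith [hx.1]
  · rw [S.GB i hi hA, ← S.per i j hi hj hij]; exact h

theorem amono_aux (S : OSys N) {i j : ℕ} (hij : i < j) (hj : j < N) (hAj : S.A j)
    (hAi : ¬ S.A i) : ¬ S.u < S.y i j := by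
  intro h
  have hi : i < N := by omega
  have t := S.tmono i j hij hj
  have ti := S.tpos i hi
  have tj := S.tlt j hj
  have e1 := S.oL hi hj hij.ne hAi tj.le t le_rfl h
  have e2 := S.oR hj hi hij.ne' hAj ti.le t le_rfl (by rwa [S.y_symm])
  rw [S.Fend' hi hj hij.ne] at e1
  rw [S.Fend' hj hi hij.ne'] at e2
  have s1 : Icc (S.τ i) (S.τ j) ⊆ odom S.P S.τ S.A i := fun x hx =>
    ⟨by linarith [hx.1], by linarith [hx.2], fun h => absurd h hAi, fun _ => by linarith [hx.1]⟩
  have s2 : Icc (S.τ i) (S.τ j) ⊆ odom S.P S.τ S.A j := fun x hx =>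
    ⟨by linarith [hx.1], by linarith [hx.2], fun _ => by linarith [hx.2], fun h => absurd hAj h⟩
  obtain ⟨θ, h1, h2, h3⟩ := exists_eq_on t.le ((S.contO i hi).mono s1) ((S.contO j hj).mono s2)
    (Or.inr ⟨e2, e1⟩)
  rcases S.adjO i j hi hj hij.ne θ (s1 ⟨h1.le, h2.le⟩) (s2 ⟨h1.le, h2.le⟩) h3 with h | h <;> linarith

/-- The vertices that `o` reaches in the direction of increasing angles form an initial segment:
for `i < j`, edges `oi` before the ray and `oj` after the ray would cross in the sector between
`i` and `j`. -/
theorem amono (S : OSys N) {i j : ℕ} (hij : i ≤ j) (hj : j < N) (hAj : S.A j) : S.A i := by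
  rcases hij.eq_or_lt with rfl | hij
  · exact hAj
  by_contra hAi
  have hne := S.y_ne_u (by omega) hj hij.ne
  rcases hne.lt_or_gt with h | h
  · exact S.flip.amono_aux hij hj hAj hAi (neg_lt_neg h)
  · exact S.amono_aux hij hj hAj hAi h

/-- If `ij` crossed the ray above `o` and `ia` below `o`, the edge `oa` would cross `ij` twice. -/
theorem f2_aux (S : OSys N) {i j a : ℕ} (hij : i < j) (hja : j < a) (ha : a < N) (hA : S.A a)
    (h : S.u < S.y i j) : ¬ S.y i a < S.u := by
  intro h'
  have hi : i < N := by omega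
  have hj : j < N := by omega
  have tij := S.tmono i j hij hj
  have tja := S.tmono j a hja ha
  have ti := S.tpos i hi
  have tj := S.tpos j hj
  have ta := S.tlt a ha
  have hja' : S.y j a < S.u := (S.g1' hij hja ha (h'.trans h)).trans h'
  have e1 := S.oR' ha hi (by omega) hA ti.le (by linarith) le_rfl (by rwa [S.y_symm])
  have e2 := S.oR' ha hj (by omega) hA tj.le (by linarith) le_rfl (by rwa [S.y_symm])
  have e3 := S.left_lt hi ha hj (by omega) (by omega) (by omega) ta.le (by linarith) le_rfl
    tja.le (h'.trans h)
  rw [S.Fend' ha hi (by omega), ← S.Fend hi hj (by omega)] at e1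
  rw [S.Fend' ha hj (by omega), ← S.Fend' hi hj (by omega)] at e2
  rw [S.Fend' hi ha (by omega)] at e3
  have o1 : Icc 0 (S.τ a) ⊆ odom S.P S.τ S.A a := fun x hx =>
    ⟨hx.1, by linarith [hx.2], fun _ => hx.2, fun h => absurd hA h⟩
  have s1 : Icc 0 (S.τ i) ⊆ edom S.P S.τ i j := fun x hx =>
    ⟨hx.1, by linarith [hx.2], Or.inl ⟨by linarith [hx.2], by linarith [hx.2]⟩⟩
  have s2 : Icc (S.τ j) (S.τ a) ⊆ edom S.P S.τ i j := fun x hx =>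
    ⟨by linarith [hx.1], by linarith [hx.2], Or.inr ⟨by linarith [hx.1], by linarith [hx.1]⟩⟩
  have o1' : Icc 0 (S.τ i) ⊆ odom S.P S.τ S.A a :=
    (Icc_subset_Icc le_rfl (by linarith)).trans o1
  have o2' : Icc (S.τ j) (S.τ a) ⊆ odom S.P S.τ S.A a :=
    (Icc_subset_Icc (by linarith) le_rfl).trans o1
  have cF := S.cont i j hi hj (by omega)
  have cG := S.contO a ha
  obtain ⟨θ, h1, h2, h3⟩ := exists_eq_on ti.le (cG.mono o1') (cF.mono s1)
    (Or.inl ⟨by rw [S.GA a ha hA]; exact h, e1⟩)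
  obtain ⟨θ', h1', h2', h3'⟩ := exists_eq_on tja.le (cG.mono o2') (cF.mono s2)
    (Or.inr ⟨e2, e3⟩)
  have := S.indepO a i j ha hi hj (by omega) (by omega) (by omega) θ θ' (o1' ⟨h1.le, h2.le⟩)
    (s1 ⟨h1.le, h2.le⟩) (o2' ⟨h1'.le, h2'.le⟩) (s2 ⟨h1'.le, h2'.le⟩) h3 h3'
  linarith

/-- Among the edges from `i` to later vertices reached after the ray, all cross the ray on the same
side of `o`. -/
theorem f2 (S : OSys N) {i j k : ℕ} (hij : i < j) (hik : i < k) (hj : j < N) (hk : k < N)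
    (hAj : S.A j) (hAk : S.A k) (h : S.u < S.y i j) : S.u < S.y i k := by
  have hne := S.y_ne_u (by omega) hk hik.ne
  rcases lt_trichotomy j k with hjk | rfl | hjk
  · exact lt_of_le_of_ne (not_lt.1 (S.f2_aux hij hjk hk hAk h)) hne.symm
  · exact h
  · by_contra hc
    have := S.flip.f2_aux hik hjk hj hAj (neg_lt_neg (lt_of_le_of_ne (not_lt.1 hc) hne))
    exact this (neg_lt_neg h)

/-- Two edges at `o` in the sector after the ray keep their order, as they meet only on the ray. -/
theorem G_lt_G (S : OSys N) {x a : ℕ} (hx : x < N) (ha : a < N) (hxa : x ≠ a) (hAx : S.A x)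
    (hAa : S.A a) {c θ : ℝ} (h0 : 0 < θ) (h1 : θ ≤ c) (hcx : c ≤ S.τ x) (hca : c ≤ S.τ a)
    (h : S.G x c < S.G a c) : S.G x θ < S.G a θ := by
  have tx := S.tlt x hx
  have s1 : Icc θ c ⊆ odom S.P S.τ S.A x := fun y hy =>
    ⟨by linarith [hy.1], by linarith [hy.2], fun _ => by linarith [hy.2], fun h => absurd hAx h⟩
  have s2 : Icc θ c ⊆ odom S.P S.τ S.A a := fun y hy =>
    ⟨by linarith [hy.1], by linarith [hy.2], fun _ => by linarith [hy.2], fun h => absurd hAa h⟩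
  refine lt_of_ne_on ((S.contO x hx).mono s1) ((S.contO a ha).mono s2) ?_ ⟨h1, le_rfl⟩
    ⟨le_rfl, h1⟩ h
  intro y hy he
  rcases S.adjO x a hx ha hxa y (s1 hy) (s2 hy) he with h | h
  · linarith [hy.1]
  · linarith [hy.2]

/-- For `a < x < b`, the edge `ox` runs below `oa`, which runs below `ab`. -/
theorem alpha (S : OSys N) {a x b : ℕ} (hax : a < x) (hxb : x < b) (hb : b < N) (hA : S.A x)
    (h : S.u < S.y a b) (h' : S.u < S.y a x) : S.DisjO x a b := by
  have hx : x < N := by omega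
  have ha : a < N := by omega
  have hAa := S.amono hax.le hx hA
  have tax := S.tmono a x hax hx
  have txb := S.tmono x b hxb hb
  have ta := S.tpos a ha
  rintro θ ⟨h0, -, h1, -⟩ ⟨-, -, h2⟩
  have hθ : θ ≤ S.τ a := by
    rcases h2 with h2 | h2
    · exact h2.1
    · linarith [h1 hA]
  apply ne_of_lt
  rcases h0.eq_or_lt with rfl | h0
  · rw [S.GA x hx hA]; exact h
  have e1 := S.oR hx ha (by omega) hA ta.le tax le_rfl (by rwa [S.y_symm])
  rw [S.Fend' hx ha (by omega)] at e1
  refine (S.G_lt_G hx ha (by omega) hA hAa h0 hθ tax.le le_rfl e1).trans_le ?_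
  rcases hθ.eq_or_lt with rfl | hθ
  · rw [S.Fend ha hb (by omega)]
  · exact (S.oR ha hb (by omega) hAa h0.le hθ (by linarith) h).le

/-- For `x < a < b`, the edge `ab` runs above `ox`: either `oa` or `xa` lies between the two,
depending on the side of `o` on which `xa` crosses the ray. -/
theorem beta (S : OSys N) {a x b : ℕ} (hxa : x < a) (hab : a < b) (hb : b < N) (hA : S.A a)
    (h : S.u < S.y a b) (h' : S.y x b < S.y a b) : S.DisjO x a b := by
  have hx : x < N := by omega
  have ha : a < N := by omega
  have hAx := S.amono hxa.le ha hA
  have txa := S.tmono x a hxa ha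
  have tab := S.tmono a b hab hb
  have tx := S.tpos x hx
  rintro θ ⟨h0, -, h1, -⟩ -
  have hθ := h1 hAx
  apply ne_of_lt
  rcases h0.eq_or_lt with rfl | h0
  · rw [S.GA x hx hAx]; exact h
  rcases (S.y_ne_u hx ha hxa.ne).lt_or_gt with c | c
  · have e1 := S.oR' ha hx (by omega) hA tx.le txa le_rfl (by rwa [S.y_symm])
    rw [S.Fend' ha hx (by omega)] at e1
    refine (S.G_lt_G hx ha (by omega) hAx hA h0 hθ le_rfl txa.le e1).trans ?_
    exact S.oR ha hb (by omega) hA h0.le (by linarith) (by linarith) h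
  · have hne : S.y x a ≠ S.y x b := S.y_ne hx ha hb (by omega) (by omega) (by omega)
    have e1 : S.y x a < S.y x b := by
      by_contra hc
      exact lt_asymm h' (S.g1' hxa hab hb (lt_of_le_of_ne (not_lt.1 hc) hne.symm))
    have e2 : S.G x θ ≤ S.F x a θ := by
      rcases hθ.eq_or_lt with rfl | hθ
      · rw [S.Fend hx ha (by omega)]
      · exact (S.oR hx ha (by omega) hAx h0.le hθ (by linarith) c).le
    refine e2.trans_lt ?_
    rw [S.symm x a]
    exact S.right_lt ha hx hb (by omega) (by omega) (by omega) h0.le (by linarith) hθ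
      (by linarith) (by rw [S.y_symm a x]; exact e1.trans h')

end OSys

/-! ### The zigzag path, and where to insert the vertex on the ray -/

namespace Core
variable {N : ℕ}

theorem mirror_Disj {S : Core N} {i j k l : ℕ} (hi : i < N) (hj : j < N) (hk : k < N)
    (hl : l < N) (h : S.mirror.Disj (N - 1 - i) (N - 1 - j) (N - 1 - k) (N - 1 - l)) :
    S.Disj i j k l := by
  have ei : N - 1 - (N - 1 - i) = i := by omega
  have ej : N - 1 - (N - 1 - j) = j := by omega
  have ek : N - 1 - (N - 1 - k) = k := by omega
  have el : N - 1 - (N - 1 - l) = l := by omega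
  have key : ∀ i j θ, N - 1 - (N - 1 - i) = i → N - 1 - (N - 1 - j) = j →
      θ ∈ edom S.P S.τ i j → S.P - θ ∈ edom S.mirror.P S.mirror.τ (N - 1 - i) (N - 1 - j) := by
    rintro i j θ ei ej ⟨q1, q2, q3⟩
    refine ⟨by linarith, show S.P - θ ≤ S.P by linarith, ?_⟩
    show (_ ≤ S.P - S.τ _ ∧ _ ≤ S.P - S.τ _) ∨ (S.P - S.τ _ ≤ _ ∧ S.P - S.τ _ ≤ _)
    rw [ei, ej]
    rcases q3 with h | h
    · right; constructor <;> linarith [h.1, h.2]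
    · left; constructor <;> linarith [h.1, h.2]
  intro θ a b e
  refine h (S.P - θ) (key _ _ _ ei ej a) (key _ _ _ ek el b) ?_
  show S.F _ _ (S.P - (S.P - θ)) = S.F _ _ (S.P - (S.P - θ))
  rw [ei, ej, ek, el, sub_sub_cancel]; exact e

theorem flip_Disj {S : Core N} {i j k l : ℕ} (h : S.flip.Disj i j k l) : S.Disj i j k l :=
  fun θ a b e => h θ a b (by show - _ = - _; rw [e])

end Core

/-- The zigzag path `x, x + ⌊N/2⌋, x - 1, x + ⌊N/2⌋ - 1, x - 2, …`, read modulo `N`. -/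
def zig (N x p : ℕ) : ℕ :=
  if N ≤ x + N - p / 2 + (p % 2) * (N / 2) then x + N - p / 2 + (p % 2) * (N / 2) - N
  else x + N - p / 2 + (p % 2) * (N / 2)

theorem zig_even {N x q : ℕ} (h : q ≤ x) : zig N x (2 * q) = x - q := by
  unfold zig
  rw [show 2 * q / 2 = q by omega, show 2 * q % 2 = 0 by omega]
  split_ifs <;> omega

theorem zig_even' {N x q : ℕ} (h : x < q) : zig N x (2 * q) = x + N - q := by
  unfold zig
  rw [show 2 * q / 2 = q by omega, show 2 * q % 2 = 0 by omega]
  split_ifs <;> omega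

theorem zig_odd {N x q : ℕ} (h : q ≤ x + N / 2) (hq : q ≤ x + N) :
    zig N x (2 * q + 1) = x + N / 2 - q := by
  unfold zig
  rw [show (2 * q + 1) / 2 = q by omega, show (2 * q + 1) % 2 = 1 by omega]
  split_ifs <;> omega

theorem zig_lt {N x p : ℕ} (hx : x + N / 2 < N) (hp : p < N) : zig N x p < N := by
  obtain ⟨q, rfl | rfl⟩ := Nat.even_or_odd' p
  · rcases le_or_gt q x with h | h
    · rw [zig_even h]; omega
    · rw [zig_even' h]; omega
  · rw [zig_odd (by omega) (by omega)]; omega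

theorem zig_inj {N x p p' : ℕ} (hx : x + N / 2 < N) (hp : p < N) (hp' : p' < N)
    (h : zig N x p = zig N x p') : p = p' := by
  obtain ⟨q, rfl | rfl⟩ := Nat.even_or_odd' p <;> obtain ⟨r, rfl | rfl⟩ := Nat.even_or_odd' p'
  · rcases le_or_gt q x with h1 | h1 <;> rcases le_or_gt r x with h2 | h2 <;>
      simp only [zig_even, zig_even', h1, h2] at h <;> omega
  · rw [zig_odd (q := r) (by omega) (by omega)] at h
    rcases le_or_gt q x with h1 | h1 <;> simp only [zig_even, zig_even', h1] at h <;> omega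
  · rw [zig_odd (q := q) (by omega) (by omega)] at h
    rcases le_or_gt r x with h1 | h1 <;> simp only [zig_even, zig_even', h1] at h <;> omega
  · rw [zig_odd (q := r) (by omega) (by omega), zig_odd (q := q) (by omega) (by omega)] at h
    omega

/-- An early edge of the zigzag path joins some `a ≤ x` to `a + ⌊N/2⌋` or `a + ⌊N/2⌋ + 1`. -/
theorem zig_low {N x p : ℕ} (hp : p + 1 < N) (h : (p + 1) / 2 ≤ x) :
    (zig N x p = x - (p + 1) / 2 ∧ zig N x (p + 1) = x + N / 2 - p / 2) ∨
    (zig N x (p + 1) = x - (p + 1) / 2 ∧ zig N x p = x + N / 2 - p / 2) := by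
  obtain ⟨q, rfl | rfl⟩ := Nat.even_or_odd' p
  · left
    rw [zig_even (by omega), zig_odd (by omega) (by omega)]; omega
  · right
    rw [show 2 * q + 1 + 1 = 2 * (q + 1) by ring] at *
    rw [zig_even (by omega), zig_odd (by omega) (by omega)]; omega

/-- A late edge of the zigzag path joins two vertices greater than `x`. -/
theorem zig_high {N x p : ℕ} (hp : p + 1 < N) (h : x < (p + 1) / 2) :
    (zig N x p = x + N / 2 - p / 2 ∧ zig N x (p + 1) = x + N - (p + 1) / 2) ∨
    (zig N x (p + 1) = x + N / 2 - p / 2 ∧ zig N x p = x + N - (p + 1) / 2) := by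
  obtain ⟨q, rfl | rfl⟩ := Nat.even_or_odd' p
  · right
    rw [zig_even' (by omega), zig_odd (by omega) (by omega)]; omega
  · left
    rw [show 2 * q + 1 + 1 = 2 * (q + 1) by ring] at *
    rw [zig_even' (by omega), zig_odd (by omega) (by omega)]; omega

theorem Core.of_ends {N : ℕ} (S : Core N) {i j k l a b c d : ℕ}
    (h1 : (i = a ∧ j = b) ∨ (j = a ∧ i = b)) (h2 : (k = c ∧ l = d) ∨ (l = c ∧ k = d))
    (h : S.Disj a b c d) : S.Disj i j k l := by
  rcases h1 with ⟨rfl, rfl⟩ | ⟨rfl, rfl⟩ <;> rcases h2 with ⟨rfl, rfl⟩ | ⟨rfl, rfl⟩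
  · exact h
  · exact h.swap.left.swap
  · exact h.left
  · exact h.left.swap.left.swap

/-- The zigzag path is plane: two of its edges that do not share an end interleave. -/
theorem Core.zig_disj {N : ℕ} (S : Core N) {x p q : ℕ} (hx : x + N / 2 < N) (hpq : p + 1 < q)
    (hq : q + 1 < N) : S.Disj (zig N x p) (zig N x (p + 1)) (zig N x q) (zig N x (q + 1)) := by
  rcases le_or_gt ((p + 1) / 2) x with h1 | h1 <;> rcases le_or_gt ((q + 1) / 2) x with h2 | h2
  · exact S.of_ends (zig_low (by omega) h1) (zig_low hq h2)
      (S.inter (by omega) (by omega) (by omega) (by omega)).swap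
  · exact S.of_ends (zig_low (by omega) h1) (zig_high hq h2)
      (S.inter (by omega) (by omega) (by omega) (by omega))
  · omega
  · exact S.of_ends (zig_high (by omega) h1) (zig_high hq h2)
      (S.inter (by omega) (by omega) (by omega) (by omega)).swap

namespace OSys
variable {N : ℕ}

theorem of_ends (S : OSys N) {x i j a b : ℕ} (h1 : (i = a ∧ j = b) ∨ (j = a ∧ i = b))
    (h : S.DisjO x a b) : S.DisjO x i j := by
  rcases h1 with ⟨rfl, rfl⟩ | ⟨rfl, rfl⟩
  · exact h
  · exact h.swap

/-- There is a plane path `z` through the vertices other than `o`, and a position `t` at which `o`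
can be inserted: the edges from `o` to `z (t - 1)` and `z t` (those that exist) avoid all other
edges of `z`. -/
def Good (S : OSys N) : Prop :=
  ∃ (z : ℕ → ℕ) (t : ℕ), (∀ p, p < N → z p < N) ∧ (∀ p q, p < N → q < N → z p = z q → p = q) ∧
    t ≤ N ∧ (∀ p q, p + 1 < q → q + 1 < N → S.Disj (z p) (z (p + 1)) (z q) (z (q + 1))) ∧
    ∀ v, v < N → (v + 1 = t ∨ v = t) → ∀ p, p + 1 < N → p ≠ v → p + 1 ≠ v →
      S.DisjO (z v) (z p) (z (p + 1))

theorem Good.of_flip {S : OSys N} (h : S.flip.Good) : S.Good := by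
  obtain ⟨z, t, h1, h2, h3, h4, h5⟩ := h
  exact ⟨z, t, h1, h2, h3, fun p q a b => Core.flip_Disj (h4 p q a b),
    fun v a b p c d e => flip_DisjO (h5 v a b p c d e)⟩

theorem Good.of_mirror {S : OSys N} (h : S.mirror.Good) : S.Good := by
  obtain ⟨z, t, h1, h2, h3, h4, h5⟩ := h
  have inv : ∀ p, p < N → N - 1 - (N - 1 - z p) = z p := fun p hp => by
    have := h1 p hp; omega
  have lt : ∀ p, p < N → N - 1 - z p < N := fun p hp => by omega
  refine ⟨fun p => N - 1 - z p, t, lt, fun p q hp hq e => ?_, h3,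
    fun p q a b => ?_, fun v a b p c d e => ?_⟩
  · have := inv p hp; have := inv q hq; exact h2 p q hp hq (by dsimp only at e; omega)
  · apply Core.mirror_Disj (lt _ (by omega)) (lt _ (by omega)) (lt _ (by omega)) (lt _ (by omega))
    rw [inv p (by omega), inv (p + 1) (by omega), inv q (by omega), inv (q + 1) (by omega)]
    exact h4 p q a b
  · apply mirror_DisjO (lt _ a) (lt _ (by omega)) (lt _ c)
    rw [inv v a, inv p (by omega), inv (p + 1) c]
    exact h5 v a b p c d e

/-- The edges from `a` to `a + 1`, `a + m` and `a + m + 1` cross the ray on the same side of `o`. -/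
def okA (S : OSys N) (m a : ℕ) : Prop :=
  (S.u < S.y a (a + 1) ∧ S.u < S.y a (a + m) ∧ S.u < S.y a (a + m + 1)) ∨
  (S.y a (a + 1) < S.u ∧ S.y a (a + m) < S.u ∧ S.y a (a + m + 1) < S.u)

theorem flip_okA (S : OSys N) (m a : ℕ) : S.flip.okA m a ↔ S.okA m a := by
  simp only [okA, flip_y, flip_u, neg_lt_neg_iff]; exact or_comm

theorem safe_low_aux (S : OSys N) {m a x b : ℕ} (hax : a < x) (hxb : x < b) (hb : b < N)
    (hA : S.A x) (hba : b = a + m ∨ b = a + m + 1) (h1 : S.u < S.y a (a + 1))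
    (h2 : S.u < S.y a (a + m)) (h3 : S.u < S.y a (a + m + 1)) : S.DisjO x a b := by
  refine S.alpha hax hxb hb hA (by rcases hba with rfl | rfl <;> assumption) ?_
  exact S.f2 (by omega) hax (by omega) (by omega) (S.amono hax (by omega) hA) hA h1

/-- If `a` satisfies `okA`, the edges from `o` to vertices between `a` and `b` avoid the edge `ab`
of the zigzag path. -/
theorem safe_low (S : OSys N) {m a x b : ℕ} (hax : a < x) (hxb : x < b) (hb : b < N)
    (hA : S.A x) (hba : b = a + m ∨ b = a + m + 1) (h : S.okA m a) : S.DisjO x a b := by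
  rcases h with ⟨h1, h2, h3⟩ | ⟨h1, h2, h3⟩
  · exact S.safe_low_aux hax hxb hb hA hba h1 h2 h3
  · exact flip_DisjO (S.flip.safe_low_aux hax hxb hb hA hba (neg_lt_neg h1) (neg_lt_neg h2)
      (neg_lt_neg h3))

/-- If `x` violates `okA` and `ab` crosses the ray above `o`, with `x < a < b`, then `xb` crosses
below `ab`. Otherwise all edges from `x` to vertices up to `b` would cross above `o`. -/
theorem hi_pos (S : OSys N) {m a x b : ℕ} (hm : 0 < m) (hxa : x < a) (hab : a < b) (hb : b < N)
    (hbx : x + m + 1 ≤ b) (hx : ¬ S.okA m x) (h : S.u < S.y a b) : S.y x b < S.y a b := by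
  by_contra hc
  have hne : S.y b x ≠ S.y b a := S.y_ne hb (by omega) (by omega) (by omega) (by omega) (by omega)
  rw [S.y_symm b x, S.y_symm b a] at hne
  have hlt : S.y a b < S.y x b := lt_of_le_of_ne (not_lt.1 hc) hne.symm
  have hne2 : S.y x a ≠ S.y x b :=
    S.y_ne (by omega) (by omega) hb (by omega) (by omega) (by omega)
  have h3 : S.y x b < S.y x a := by
    by_contra hc'
    exact lt_asymm hlt (S.g1 hxa hab hb (lt_of_le_of_ne (not_lt.1 hc') hne2))
  have key : ∀ k, x < k → k ≤ b → S.u < S.y x k := fun k h1 h2 => by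
    rcases h2.eq_or_lt with rfl | h2
    · exact h.trans hlt
    · exact (h.trans hlt).trans (S.sig' hxa h1 hab h2 hb h3)
  exact hx (Or.inl ⟨key _ (by omega) (by omega), key _ (by omega) (by omega),
    key _ (by omega) (by omega)⟩)

theorem hi_neg (S : OSys N) {m a x b : ℕ} (hm : 0 < m) (hxa : x < a) (hab : a < b) (hb : b < N)
    (hbx : x + m + 1 ≤ b) (hx : ¬ S.okA m x) (h : S.y a b < S.u) : S.y a b < S.y x b :=
  neg_lt_neg_iff.1 (S.flip.hi_pos hm hxa hab hb hbx (by rwa [flip_okA]) (neg_lt_neg h))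

/-- If `x` violates `okA`, the edge `ox` avoids the edges `ab` with `x < a` and `b` far from `x`. -/
theorem safe_high (S : OSys N) {m a x b : ℕ} (hm : 0 < m) (hxa : x < a) (hab : a < b)
    (hb : b < N) (hbx : x + m + 1 ≤ b) (hA : S.A a) (hx : ¬ S.okA m x) : S.DisjO x a b := by
  rcases (S.y_ne_u (by omega) hb hab.ne).lt_or_gt with h | h
  · exact flip_DisjO (S.flip.beta hxa hab hb hA (neg_lt_neg h)
      (neg_lt_neg (S.hi_neg hm hxa hab hb hbx hx h)))
  · exact S.beta hxa hab hb hA h (S.hi_pos hm hxa hab hb hbx hx h)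

/-- If more than half of the vertices are reached from `o` after the ray, `o` can be put in front of
the zigzag path that starts in the first vertex `x` violating `okA` (or in the last admissible
start, if there is none). -/
theorem good_of_A (S : OSys N) (hN : 0 < N) (hA : S.A (N / 2)) : S.Good := by
  classical
  have hex : ∃ x, N ≤ x + N / 2 + 1 ∨ ¬ S.okA (N / 2) x := ⟨N, Or.inl (by omega)⟩
  set x := Nat.find hex with hxd
  have hx1 := Nat.find_spec hex
  rw [← hxd] at hx1
  have hx2 : ∀ a, a < x → S.okA (N / 2) a := fun a ha => by
    have := Nat.find_min hex ha
    push Not at this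
    exact this.2
  have hx3 : x + N / 2 + 1 ≤ N := by
    have : x ≤ N - N / 2 - 1 := Nat.find_min' hex (Or.inl (by omega))
    omega
  have hA' : ∀ a, a ≤ N / 2 → S.A a := fun a ha => S.amono ha (by omega) hA
  refine ⟨zig N x, 0, fun p => zig_lt (by omega), fun p q => zig_inj (by omega), by omega,
    fun p q => S.zig_disj (by omega), ?_⟩
  intro v hv ht p hp h1 h2
  obtain rfl : v = 0 := by omega
  have e : zig N x 0 = x := by have := zig_even (N := N) (x := x) (q := 0) (by omega); simpa
  rw [e]
  rcases le_or_gt ((p + 1) / 2) x with h | h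
  · exact S.of_ends (zig_low hp h) (S.safe_low (by omega) (by omega) (by omega)
      (hA' x (by omega)) (by omega) (hx2 _ (by omega)))
  · have : ¬ S.okA (N / 2) x := by
      rcases hx1 with h' | h'
      · omega
      · exact h'
    exact S.of_ends (zig_high hp h) (S.safe_high (by omega) (by omega) (by omega)
      (by omega) (by omega) (hA' _ (by omega)) this)

/-- For `N = 2 * m`: the edge from `o` to `s` avoids all chords `a (a + m)` and `a (a + m + 1)`
that do not contain `s`. These chords are the edges of the zigzag path starting in `m - 1`. -/
def SafeC (S : OSys N) (m s : ℕ) : Prop :=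
  ∀ a b, a < m → b < N → (b = a + m ∨ b = a + m + 1) → s ≠ a → s ≠ b → S.DisjO s a b

theorem SafeC.of_mirror {S : OSys N} {m s : ℕ} (hN : N = 2 * m) (hs : s < N)
    (h : S.mirror.SafeC m (N - 1 - s)) : S.SafeC m s := by
  intro a b ha hb hab h1 h2
  apply mirror_DisjO hs (by omega) hb
  exact (h (N - 1 - b) (N - 1 - a) (by omega) (by omega) (by omega) (by omega) (by omega)).swap

theorem SafeC.of_flip {S : OSys N} {m s : ℕ} (h : S.flip.SafeC m s) : S.SafeC m s :=
  fun a b ha hb hab h1 h2 => flip_DisjO (h a b ha hb hab h1 h2)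

/-- Position `t` of the zigzag path is good for inserting `o` as soon as the neighbours of `o` there
are safe. -/
theorem good_of_safe (S : OSys N) {m t : ℕ} (hN : N = 2 * m) (hm : 0 < m) (ht : t ≤ N)
    (h : ∀ v, v < N → (v + 1 = t ∨ v = t) → S.SafeC m (zig N (m - 1) v)) : S.Good := by
  refine ⟨zig N (m - 1), t, fun p => zig_lt (by omega), fun p q => zig_inj (by omega), ht,
    fun p q => S.zig_disj (by omega), ?_⟩
  intro v hv hvt p hp h1 h2
  have e1 : zig N (m - 1) v ≠ zig N (m - 1) p := fun e =>
    h1 (zig_inj (by omega) hv (by omega) e).symm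
  have e2 : zig N (m - 1) v ≠ zig N (m - 1) (p + 1) := fun e =>
    h2 (zig_inj (by omega) hv (by omega) e).symm
  have hz := zig_low (N := N) (x := m - 1) (p := p) hp (by omega)
  refine S.of_ends hz (h v hv hvt _ _ (by omega) (by omega) (by omega) ?_ ?_)
  · rcases hz with hz | hz <;> [rw [← hz.1]; rw [← hz.1]] <;> assumption
  · rcases hz with hz | hz <;> [rw [← hz.2]; rw [← hz.2]] <;> assumption

/-- If both ends of a chord are safe, then `o` can be inserted into that chord. -/
theorem good_of_chord (S : OSys N) {m a b : ℕ} (hN : N = 2 * m) (ha : a < m) (hb : b < N)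
    (hab : b = a + m ∨ b = a + m + 1) (h1 : S.SafeC m a) (h2 : S.SafeC m b) : S.Good := by
  rcases hab with rfl | rfl
  · refine S.good_of_safe (t := 2 * (m - 1 - a) + 1) hN (by omega) (by omega) ?_
    rintro v hv (h | h)
    · obtain rfl : v = 2 * (m - 1 - a) := by omega
      rw [zig_even (by omega), show m - 1 - (m - 1 - a) = a by omega]; exact h1
    · subst h
      rw [zig_odd (by omega) (by omega), show m - 1 + N / 2 - (m - 1 - a) = a + m by omega]
      exact h2
  · refine S.good_of_safe (t := 2 * (m - 1 - a)) hN (by omega) (by omega) ?_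
    rintro v hv (h | h)
    · obtain rfl : v = 2 * (m - 2 - a) + 1 := by omega
      rw [zig_odd (by omega) (by omega), show m - 1 + N / 2 - (m - 2 - a) = a + m + 1 by omega]
      exact h2
    · subst h
      rw [zig_even (by omega), show m - 1 - (m - 1 - a) = a by omega]; exact h1

/-- The first vertex violating `okA` (or `m - 1`) is safe. -/
theorem xSafe (S : OSys N) {m x : ℕ} (hN : N = 2 * m) (hA : S.A (m - 1)) (hx : x < m)
    (h1 : ∀ a, a < x → S.okA m a) (h2 : x + 1 = m ∨ ¬ S.okA m x) : S.SafeC m x := by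
  intro a b ha hb hab h3 h4
  rcases lt_or_gt_of_ne h3 with h | h
  · have : ¬ S.okA m x := by
      rcases h2 with h2 | h2
      · omega
      · exact h2
    exact S.safe_high (by omega) h (by omega) hb (by omega)
      (S.amono (j := m - 1) (by omega) (by omega) hA) this
  · exact S.safe_low h (by omega) hb (S.amono (j := m - 1) (by omega) (by omega) hA) hab (h1 a h)

/-- Let `x` be the first vertex violating `okA`. Among the chords from a vertex `a ≤ x`, starting
with `pq`, let `pq` be lowest on the ray and above `o`. Then `p` is safe. -/
theorem pSafe (S : OSys N) {m x p q : ℕ} (hN : N = 2 * m) (hA : S.A (m - 1)) (hx : x + 1 < m)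
    (h1 : ∀ a, a < x → S.okA m a) (h2 : ¬ S.okA m x) (hp : p ≤ x)
    (hq : q = p + m ∨ (q = p + m + 1 ∧ p < x)) (hpos : S.u < S.y p q)
    (hmin : ∀ a b, p ≤ a → a ≤ x → (b = a + m ∨ (b = a + m + 1 ∧ a < x)) → S.y p q ≤ S.y a b) :
    S.SafeC m p := by
  rcases hp.eq_or_lt with rfl | hpx
  · exact S.xSafe hN hA (by omega) h1 (Or.inr h2)
  intro a b ha hb hab h3 h4
  have hAA : ∀ c, c < m → S.A c := fun c hc => S.amono (j := m - 1) (by omega) (by omega) hA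
  rcases lt_or_gt_of_ne h3 with h | h
  swap
  · exact S.safe_low h (by omega) hb (hAA _ (by omega)) hab (h1 a (by omega))
  have hpb : ∀ k, p < k → k < N → k ≠ b → S.y p k ≠ S.y p b := fun k c d e =>
    S.y_ne (by omega) d hb (by omega) (by omega) e
  have hne : S.y b p ≠ S.y b a := S.y_ne hb (by omega) (by omega) (by omega) (by omega) (by omega)
  rw [S.y_symm b p, S.y_symm b a] at hne
  rcases (S.y_ne_u (i := a) (j := b) (by omega) hb (by omega)).lt_or_gt with hs | hs
  · refine flip_DisjO (S.flip.beta h (by omega) hb (hAA _ ha) (neg_lt_neg hs) (neg_lt_neg ?_))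
    by_contra hc
    have hlt : S.y p b < S.y a b := lt_of_le_of_ne (not_lt.1 hc) hne
    have h5 : S.y p a < S.y p b := by
      by_contra hc'
      exact lt_asymm hlt (S.g1' h (by omega) hb
        (lt_of_le_of_ne (not_lt.1 hc') (hpb a h (by omega) (by omega)).symm))
    -- `pq` is above `o`, which is above `ab`
    have h6 : S.y p q ≤ S.y p b := by
      rcases eq_or_ne q b with rfl | hqb
      · exact le_rfl
      · exact (S.sig h (by omega) (by omega) (by omega) hb h5).le
    linarith
  · refine S.beta h (by omega) hb (hAA _ ha) hs ?_
    by_contra hc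
    have hlt : S.y a b < S.y p b := lt_of_le_of_ne (not_lt.1 hc) hne.symm
    have h5 : S.y p b < S.y p a := by
      by_contra hc'
      exact lt_asymm hlt (S.g1 h (by omega) hb
        (lt_of_le_of_ne (not_lt.1 hc') (hpb a h (by omega) (by omega))))
    have h6 : S.y p b ≤ S.y p q := by
      rcases eq_or_ne q b with rfl | hqb
      · exact le_rfl
      · exact (S.sig' h (by omega) (by omega) (by omega) hb h5).le
    -- minimality of `pq` excludes `a ≤ x`, and `okA` fails at `x`, which excludes `x < a`
    have hD : S.y p q ≤ S.y x (x + m) := hmin x (x + m) hp le_rfl (Or.inl rfl)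
    rcases lt_trichotomy a x with hax | rfl | hax
    · have := hmin a b h.le hax.le (by omega)
      linarith
    · rcases hab with rfl | rfl
      · linarith
      · have h7 : S.y a (a + m + 1) < S.y a (a + m) := by linarith
        exact h2 (Or.inl ⟨hs.trans (S.sig' (by omega) (by omega) (by omega) (by omega) hb h7),
          hs.trans h7, hs⟩)
    · have hbx : x + m + 1 ≤ b := by omega
      have h7 := S.hi_pos (by omega) hax (by omega) hb hbx h2 hs
      have h8 : S.y x b < S.y x a :=
        S.sig' (j := x + m) (by omega) (by omega) (by omega) (by omega) hb (by linarith)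
      exact lt_asymm h7 (S.g1' hax (by omega) hb h8)

theorem mirror_okA {S : OSys N} {m b : ℕ} (hb : b < N) (hm : m + 1 ≤ b) (h0 : 0 < m) :
    S.mirror.okA m (N - 1 - b) ↔
    ((S.u < S.y (b - 1) b ∧ S.u < S.y (b - m) b ∧ S.u < S.y (b - m - 1) b) ∨
      (S.y (b - 1) b < S.u ∧ S.y (b - m) b < S.u ∧ S.y (b - m - 1) b < S.u)) := by
  unfold okA
  rw [mirror_y _ (by omega) (by omega) (by omega), mirror_y _ (by omega) (by omega) (by omega),
    mirror_y _ (by omega) (by omega) (by omega), mirror_u,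
    show N - 1 - (N - 1 - b) = b by omega, show N - 1 - (N - 1 - b + 1) = b - 1 by omega,
    show N - 1 - (N - 1 - b + m) = b - m by omega,
    show N - 1 - (N - 1 - b + m + 1) = b - m - 1 by omega,
    S.y_symm b, S.y_symm b, S.y_symm b]

/-- If `x` violates `okA` and `w` violates its mirror image, then `w` is not beyond `x + m + 1`
(for `x (x + 1)` below `xw`; the other case is dual). -/
theorem violators_near (S : OSys N) {m x w : ℕ} (hN : N = 2 * m) (hx : ¬ S.okA m x)
    (hw : w < N) (hxw : x + m + 1 < w) (hB : ¬ S.mirror.okA m (N - 1 - w))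
    (h : S.y x (x + 1) < S.y x w) : False := by
  have hs : ∀ k, x < k → k < w → S.y x k < S.y x w := fun k a b =>
    S.sig (j := x + 1) (by omega) a (by omega) b hw h
  have key : ∀ a, x < a → a < w → a < m → S.u < S.y a w := fun a h1 h2 h3 => by
    by_contra hc
    have h4 := lt_of_le_of_ne (not_lt.1 hc) (S.y_ne_u (by omega) hw h2.ne)
    exact lt_asymm (S.hi_neg (by omega) h1 h2 hw (by omega) hx h4) (S.g1 h1 h2 hw (hs a h1 h2))
  rw [mirror_okA hw (by omega) (by omega)] at hB
  have h1 := key (w - m) (by omega) (by omega) (by omega)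
  have h2 := key (w - m - 1) (by omega) (by omega) (by omega)
  have h3 : S.y (w - 1) w < S.u := by
    by_contra hc
    exact hB (Or.inl ⟨lt_of_le_of_ne (not_lt.1 hc) (S.y_ne_u (by omega) hw (by omega)).symm,
      h1, h2⟩)
  have h4 := (S.g1 (by omega) (by omega) hw (hs (w - 1) (by omega) (by omega))).trans h3
  exact hx (Or.inr ⟨(hs _ (by omega) (by omega)).trans h4, (hs _ (by omega) (by omega)).trans h4,
    (hs _ (by omega) (by omega)).trans h4⟩)

/-- If the first `x` violating `okA` and the last `w` violating its mirror image satisfy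
`w ≤ x + m`, the chords between `(w - m) w` and `x (x + m)` all cross the ray on the same side of
`o`. Both ends of the one nearest to `o` are safe. -/
theorem good_of_overlap (S : OSys N) {m x w : ℕ} (hN : N = 2 * m) (hA : S.A (m - 1)) (hA' : ¬ S.A m)
    (hx : x + 1 < m) (hxo : ∀ a, a < x → S.okA m a) (hxn : ¬ S.okA m x) (hmw : m < w)
    (hw : w < N) (hwo : ∀ b, w < b → b < N → S.mirror.okA m (N - 1 - b))
    (hwn : ¬ S.mirror.okA m (N - 1 - w)) (hwx : w ≤ x + m) (h : S.u < S.y (w - m) w) :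
    S.Good := by
  classical
  have stepQ : ∀ a, a < x → S.u < S.y a (a + m) → S.u < S.y a (a + m + 1) := fun a h1 h2 => by
    rcases hxo a h1 with h | h
    · exact h.2.2
    · exact absurd h2 (lt_asymm h.2.1)
  -- walk along the chords `a (a + m)`, `a (a + m + 1)`, `(a + 1) (a + m + 1)`: consecutive ones
  -- cross the ray on the same side of `o`, by `okA` and its mirror image in turn
  have hD : ∀ d, w - m + d ≤ x → S.u < S.y (w - m + d) (w - m + d + m) := by
    intro d
    induction d with
    | zero => intro _; rw [show w - m + 0 + m = w by omega]; exact h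
    | succ d ih =>
      intro hd
      have h1 := stepQ _ (by omega) (ih (by omega))
      have h2 := hwo (w - m + d + m + 1) (by omega) (by omega)
      rw [mirror_okA (by omega) (by omega) (by omega),
        show w - m + d + m + 1 - m - 1 = w - m + d by omega,
        show w - m + d + m + 1 - m = w - m + (d + 1) by omega] at h2
      rw [show w - m + (d + 1) + m = w - m + d + m + 1 by omega]
      rcases h2 with h2 | h2
      · exact h2.2.1
      · exact absurd h1 (lt_asymm h2.2.2)
  have hD' : ∀ a, w - m ≤ a → a ≤ x → S.u < S.y a (a + m) := fun a h1 h2 => by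
    have := hD (a - (w - m)) (by omega)
    rwa [show w - m + (a - (w - m)) = a by omega] at this
  let C : Finset (ℕ × ℕ) := (Finset.range N ×ˢ Finset.range N).filter fun e =>
    w - m ≤ e.1 ∧ e.1 ≤ x ∧ (e.2 = e.1 + m ∨ (e.2 = e.1 + m + 1 ∧ e.1 < x))
  have memC : ∀ a b, (a, b) ∈ C ↔
      w - m ≤ a ∧ a ≤ x ∧ (b = a + m ∨ (b = a + m + 1 ∧ a < x)) := by
    intro a b
    simp only [C, Finset.mem_filter, Finset.mem_product, Finset.mem_range]
    constructor
    · exact fun h => h.2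
    · intro h; exact ⟨by omega, h⟩
  have hposC : ∀ a b, (a, b) ∈ C → S.u < S.y a b := by
    intro a b hab
    rw [memC] at hab
    obtain ⟨h1, h2, rfl | ⟨rfl, h3⟩⟩ := hab
    · exact hD' a h1 h2
    · exact stepQ a h3 (hD' a h1 h2)
  obtain ⟨⟨p, q⟩, hpq, hmin⟩ := Finset.exists_min_image C (fun e => S.y e.1 e.2)
    ⟨(x, x + m), by rw [memC]; omega⟩
  have hpos := hposC p q hpq
  rw [memC] at hpq
  obtain ⟨hp1, hp2, hq⟩ := hpq
  have hps : S.SafeC m p := by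
    refine S.pSafe hN hA hx hxo hxn hp2 hq hpos fun a b h1 h2 h3 => ?_
    exact hmin (a, b) (by rw [memC]; omega)
  have hqs : S.SafeC m q := by
    apply SafeC.of_mirror hN (by omega)
    refine S.mirror.pSafe (x := N - 1 - w) (q := N - 1 - p) hN ?_ (by omega) (fun a ha => ?_) hwn
      (by omega) (by omega) ?_ fun a b h1 h2 h3 => ?_
    · rw [mirror_A, show N - 1 - (m - 1) = m by omega]; exact hA'
    · have := hwo (N - 1 - a) (by omega) (by omega)
      rwa [show N - 1 - (N - 1 - a) = a by omega] at this
    · rw [mirror_y _ (by omega) (by omega) (by omega), mirror_u,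
        show N - 1 - (N - 1 - q) = q by omega, show N - 1 - (N - 1 - p) = p by omega, S.y_symm]
      exact hpos
    · rw [mirror_y _ (by omega) (by omega) (by omega), mirror_y _ (by omega) (by omega) (by omega),
        show N - 1 - (N - 1 - q) = q by omega, show N - 1 - (N - 1 - p) = p by omega, S.y_symm,
        S.y_symm (N - 1 - a)]
      exact hmin (N - 1 - b, N - 1 - a) (by rw [memC]; omega)
  exact S.good_of_chord hN (by omega) (by omega) (by omega) hps hqs

/-- The balanced case, in which `o` reaches the first half of the vertices after the ray and the
second half before the ray. -/
theorem good_special (S : OSys N) {m : ℕ} (hN : N = 2 * m) (hm : 0 < m) (hA : S.A (m - 1))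
    (hA' : ¬ S.A m) : S.Good := by
  classical
  have fnd : ∀ S : OSys N, ∃ x, x < m ∧ (∀ a, a < x → S.okA m a) ∧
      (x + 1 = m ∨ ¬ S.okA m x) := by
    intro S
    have hex : ∃ x, x + 1 = m ∨ ¬ S.okA m x := ⟨m - 1, Or.inl (by omega)⟩
    refine ⟨Nat.find hex, ?_, fun a ha => ?_, Nat.find_spec hex⟩
    · have : Nat.find hex ≤ m - 1 := Nat.find_min' hex (Or.inl (by omega))
      omega
    · have := Nat.find_min hex ha
      push Not at this
      exact this.2
  obtain ⟨x, hx, hxo, hxn⟩ := fnd S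
  obtain ⟨x', hx', hwo, hwn⟩ := fnd S.mirror
  have sx := S.xSafe hN hA hx hxo hxn
  have sx' := S.mirror.xSafe hN
    (by rw [mirror_A, show N - 1 - (m - 1) = m by omega]; exact hA') hx' hwo hwn
  obtain ⟨w, hw, rfl⟩ : ∃ w, w < N ∧ x' = N - 1 - w := ⟨N - 1 - x', by omega, by omega⟩
  have sw := SafeC.of_mirror hN hw sx'
  by_cases c1 : x + 1 = m
  · refine S.good_of_safe (t := 0) hN hm (by omega) ?_
    intro v hv h
    obtain rfl : v = 2 * 0 := by omega
    rw [zig_even (by omega), show m - 1 - 0 = x by omega]; exact sx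
  by_cases c2 : w = m
  · refine S.good_of_safe (t := N) hN hm (by omega) ?_
    intro v hv h
    obtain rfl : v = 2 * (m - 1) + 1 := by omega
    rw [zig_odd (by omega) (by omega), show m - 1 + N / 2 - (m - 1) = w by omega]; exact sw
  have hxn : ¬ S.okA m x := hxn.resolve_left c1
  have hwn : ¬ S.mirror.okA m (N - 1 - w) := hwn.resolve_left (by omega)
  have hwo' : ∀ b, w < b → b < N → S.mirror.okA m (N - 1 - b) := fun b h1 h2 =>
    hwo _ (by omega)
  rcases lt_trichotomy w (x + m + 1) with c | rfl | c
  · rcases (S.y_ne_u (i := w - m) (j := w) (by omega) hw (by omega)).lt_or_gt with h | h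
    · apply Good.of_flip
      refine S.flip.good_of_overlap (x := x) hN hA hA' (by omega) (fun a ha => ?_) (by rwa [flip_okA])
        (by omega) hw (fun b h1 h2 => ?_) ?_ (by omega) (neg_lt_neg h)
      · rw [flip_okA]; exact hxo a ha
      · have := hwo' b h1 h2
        rw [mirror_okA h2 (by omega) hm] at this ⊢
        simp only [flip_y, flip_u, neg_lt_neg_iff]; exact this.symm
      · rw [mirror_okA hw (by omega) hm] at hwn ⊢
        simp only [flip_y, flip_u, neg_lt_neg_iff]; exact fun h => hwn h.symm
    · exact S.good_of_overlap (x := x) hN hA hA' (by omega) hxo hxn (by omega) hw hwo' hwn (by omega) h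
  · exact S.good_of_chord hN (by omega) hw (Or.inr rfl) sx sw
  · exfalso
    have hne : S.y x (x + 1) ≠ S.y x w :=
      S.y_ne (by omega) (by omega) hw (by omega) (by omega) (by omega)
    rcases hne.lt_or_gt with h | h
    · exact S.violators_near hN hxn hw c hwn h
    · refine S.flip.violators_near hN (by rwa [flip_okA]) hw c ?_ (neg_lt_neg h)
      rw [mirror_okA hw (by omega) hm] at hwn ⊢
      simp only [flip_y, flip_u, neg_lt_neg_iff]; exact fun h => hwn h.symm

/-- A vertex on the ray can always be inserted into some plane path through the others. -/
theorem good (S : OSys N) : S.Good := by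
  by_cases hN : N = 0
  · subst hN
    exact ⟨id, 0, by simp, by simp, le_rfl, by simp, by simp⟩
  by_cases h1 : S.A (N / 2)
  · exact S.good_of_A (by omega) h1
  by_cases h2 : S.A (N - 1 - N / 2)
  · have hN2 : N = 2 * (N / 2) := by
      by_contra hc
      rw [show N - 1 - N / 2 = N / 2 by omega] at h2
      exact h1 h2
    exact S.good_special hN2 (by omega)
      (by rwa [show N - 1 - N / 2 = N / 2 - 1 by omega] at h2) h1
  · exact Good.of_mirror (S.mirror.good_of_A (by omega) (by rwa [mirror_A]))

end OSys

/-! ### Angles and radial functions -/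

/-- The angle of `z` in `(0, 2π]`, so that the nonnegative real axis, which plays the role of the
ray, has angle `2π`. -/
noncomputable def ang (z : ℂ) : ℝ := Real.pi + Complex.arg (-z)

theorem ang_pos (z : ℂ) : 0 < ang z := by
  unfold ang; linarith [Complex.neg_pi_lt_arg (-z)]

theorem ang_le (z : ℂ) : ang z ≤ 2 * Real.pi := by
  unfold ang; linarith [Complex.arg_le_pi (-z)]

/-- The unit vector at angle `θ`. -/
noncomputable def dir (θ : ℝ) : ℂ := Complex.exp (θ * Complex.I)

theorem dir_ne (θ : ℝ) : dir θ ≠ 0 := Complex.exp_ne_zero _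

theorem norm_dir (θ : ℝ) : ‖dir θ‖ = 1 := Complex.norm_exp_ofReal_mul_I θ

theorem dir_zero : dir 0 = 1 := by simp [dir]

theorem dir_two_pi : dir (2 * Real.pi) = 1 := by
  unfold dir; push_cast; exact Complex.exp_two_pi_mul_I

theorem continuous_dir : Continuous dir := by unfold dir; fun_prop

theorem polar_s1 (z : ℂ) : (‖z‖ : ℂ) * dir (ang z) = z := by
  have h := Complex.norm_mul_exp_arg_mul_I (-z)
  rw [norm_neg] at h
  unfold dir ang
  push_cast
  rw [add_mul, Complex.exp_add, Complex.exp_pi_mul_I]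
  linear_combination -h

theorem ang_smul {r : ℝ} (hr : 0 < r) (z : ℂ) : ang (r * z) = ang z := by
  unfold ang
  rw [← mul_neg, Complex.arg_real_mul _ hr]

/-- A point at angle `θ ∈ [0, 2π]` has angle `θ`, except that `0` and `2π` denote the same
direction. -/
theorem ang_dir {ρ θ : ℝ} (hρ : 0 < ρ) (h0 : 0 ≤ θ) (h1 : θ ≤ 2 * Real.pi) :
    θ = ang (ρ * dir θ) ∨ (θ = 0 ∧ ang (ρ * dir θ) = 2 * Real.pi) := by
  rw [ang_smul hρ]
  have h := polar_s1 (dir θ)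
  rw [norm_dir] at h
  push_cast at h
  rw [one_mul] at h
  set α := ang (dir θ) with hα
  have a0 : 0 < α := ang_pos _
  have a1 : α ≤ 2 * Real.pi := ang_le _
  have hp := Real.pi_pos
  unfold dir at h
  rw [Complex.exp_eq_exp_iff_exists_int] at h
  obtain ⟨k, hk⟩ := h
  have hk' : α = θ + k * (2 * Real.pi) := by
    have h2 : (α : ℂ) * Complex.I = ((θ + k * (2 * Real.pi) : ℝ) : ℂ) * Complex.I := by
      rw [hk]; push_cast; ring
    exact_mod_cast mul_right_cancel₀ Complex.I_ne_zero h2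
  have k1 : (k : ℝ) < 2 := by nlinarith
  have k0 : (-1 : ℝ) < k := by nlinarith
  have k1' : k < 2 := by exact_mod_cast k1
  have k0' : -1 < k := by exact_mod_cast k0
  obtain rfl | rfl : k = 0 ∨ k = 1 := by omega
  · left; rw [hk']; simp
  · right
    push_cast at hk'
    constructor <;> linarith

theorem ang_of_eq {ρ θ : ℝ} {z : ℂ} (hz : z ≠ 0) (hρ : 0 ≤ ρ) (h0 : 0 ≤ θ)
    (h1 : θ ≤ 2 * Real.pi) (h : (ρ : ℂ) * dir θ = z) :
    θ = ang z ∨ (θ = 0 ∧ ang z = 2 * Real.pi) := by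
  have : 0 < ρ := lt_of_le_of_ne hρ (by rintro rfl; apply hz; rw [← h]; simp)
  rw [← h]; exact ang_dir this h0 h1

theorem continuousAt_ang {z : ℂ} (hz : z ≠ 0) (h : ang z < 2 * Real.pi) : ContinuousAt ang z := by
  have hs : -z ∈ Complex.slitPlane := by
    rw [Complex.mem_slitPlane_iff_arg]
    refine ⟨fun e => ?_, neg_ne_zero.2 hz⟩
    unfold ang at h; rw [e] at h; linarith
  exact continuousAt_const.add ((Complex.continuousAt_arg hs).comp continuous_neg.continuousAt)

theorem cos_ang {z : ℂ} (hz : z ≠ 0) : Real.cos (ang z) = z.re / ‖z‖ := by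
  have h := congrArg Complex.re (polar_s1 z)
  have hn : ‖z‖ ≠ 0 := norm_ne_zero_iff.2 hz
  rw [Complex.re_ofReal_mul] at h
  unfold dir at h
  rw [Complex.exp_ofReal_mul_I_re] at h
  field_simp
  linarith

/-- The angles at which `K` has a point. -/
def angSet (K : Set ℂ) : Set ℝ := {θ | ∃ ρ : ℝ, 0 ≤ ρ ∧ (ρ : ℂ) * dir θ ∈ K}

open Classical in
/-- The distance from the origin of a point of `K` at angle `θ`; `0` if there is none. -/
noncomputable def rad (K : Set ℂ) (θ : ℝ) : ℝ :=
  if h : ∃ ρ : ℝ, 0 ≤ ρ ∧ (ρ : ℂ) * dir θ ∈ K then h.choose else 0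

theorem rad_nonneg (K : Set ℂ) (θ : ℝ) : 0 ≤ rad K θ := by
  unfold rad
  split_ifs with h
  · exact h.choose_spec.1
  · exact le_rfl

theorem rad_mem {K : Set ℂ} {θ : ℝ} (h : θ ∈ angSet K) : (rad K θ : ℂ) * dir θ ∈ K := by
  have h' : ∃ ρ : ℝ, 0 ≤ ρ ∧ (ρ : ℂ) * dir θ ∈ K := h
  unfold rad
  rw [dif_pos h']
  exact h'.choose_spec.2

theorem pos_of_mem {K : Set ℂ} (h0 : (0 : ℂ) ∉ K) {ρ θ : ℝ} (hρ : 0 ≤ ρ)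
    (h : (ρ : ℂ) * dir θ ∈ K) : 0 < ρ :=
  lt_of_le_of_ne hρ (by rintro rfl; apply h0; simpa using h)

theorem rad_eq {K : Set ℂ} (h0 : (0 : ℂ) ∉ K) (hK : InjOn ang K) {θ ρ : ℝ} (hρ : 0 ≤ ρ)
    (h : (ρ : ℂ) * dir θ ∈ K) : rad K θ = ρ := by
  have hm := rad_mem (K := K) (θ := θ) ⟨ρ, hρ, h⟩
  have := hK hm h (by
    rw [ang_smul (pos_of_mem h0 (rad_nonneg K θ) hm), ang_smul (pos_of_mem h0 hρ h)])
  exact_mod_cast mul_right_cancel₀ (dir_ne θ) this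

theorem mem_angSet {K : Set ℂ} {z : ℂ} (hz : z ∈ K) : ang z ∈ angSet K :=
  ⟨‖z‖, norm_nonneg z, by rwa [polar_s1]⟩

theorem rad_ang {K : Set ℂ} (h0 : (0 : ℂ) ∉ K) (hK : InjOn ang K) {z : ℂ} (hz : z ∈ K) :
    rad K (ang z) = ‖z‖ := rad_eq h0 hK (norm_nonneg z) (by rwa [polar_s1])

theorem rad_period (K : Set ℂ) : rad K 0 = rad K (2 * Real.pi) := by
  unfold rad; rw [dir_zero, dir_two_pi]

theorem zero_mem_angSet {K : Set ℂ} (h : 2 * Real.pi ∈ angSet K) : (0 : ℝ) ∈ angSet K := by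
  obtain ⟨ρ, h1, h2⟩ := h
  exact ⟨ρ, h1, by rwa [dir_zero, ← dir_two_pi]⟩

/-- A compact set with at most one point in each direction has a continuous radial function, by the
closed graph argument. -/
theorem continuousOn_rad {K : Set ℂ} (h0 : (0 : ℂ) ∉ K) (hK : InjOn ang K) (hc : IsCompact K) :
    ContinuousOn (rad K) (angSet K) := by
  intro θ₀ hθ₀
  rw [ContinuousWithinAt, Filter.tendsto_iff_ultrafilter]
  intro U hU
  have hUS : angSet K ∈ U := hU self_mem_nhdsWithin
  have hUn : (U : Filter ℝ) ≤ nhds θ₀ := hU.trans nhdsWithin_le_nhds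
  obtain ⟨z, hz, hUz⟩ := hc.ultrafilter_le_nhds' (U.map fun θ => (rad K θ : ℂ) * dir θ)
    (Ultrafilter.mem_map.2 (Filter.mem_of_superset hUS fun θ hθ => rad_mem hθ))
  have h1 : Filter.Tendsto (fun θ => (rad K θ : ℂ) * dir θ) U (nhds z) := hUz
  have h2 : Filter.Tendsto (rad K) U (nhds ‖z‖) := by
    refine h1.norm.congr fun θ => ?_
    rw [norm_mul, norm_dir, mul_one, Complex.norm_real, Real.norm_of_nonneg (rad_nonneg K θ)]
  have h3 : Filter.Tendsto dir U (nhds (dir θ₀)) := continuous_dir.continuousAt.tendsto.mono_left hUn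
  have h4 : (‖z‖ : ℂ) * dir θ₀ = z :=
    tendsto_nhds_unique (((Complex.continuous_ofReal.tendsto _).comp h2).mul h3) h1
  rw [rad_eq h0 hK (norm_nonneg z) (by rwa [h4])]
  exact h2

/-! ### The two ways in which an arc approaches the ray -/

/-- `H` occupies exactly the angles in `(0, τ]`, apart from `2π`: it runs from angle `τ` down to
the ray. -/
def DownArc (H : Set ℂ) (τ : ℝ) : Prop :=
  (∀ z ∈ H, ang z ≤ τ ∨ ang z = 2 * Real.pi) ∧ ∀ θ, 0 < θ → θ ≤ τ → ∃ z ∈ H, ang z = θ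

/-- `H` occupies exactly the angles in `[τ, 2π]`: it runs from angle `τ` up to the ray. -/
def UpArc (H : Set ℂ) (τ : ℝ) : Prop :=
  (∀ z ∈ H, τ ≤ ang z) ∧ ∀ θ, τ ≤ θ → θ ≤ 2 * Real.pi → ∃ z ∈ H, ang z = θ

theorem cos_bound {a b : ℝ} (ha : 0 < a) (hb : b < 2 * Real.pi) (hab : a ≤ b) :
    ∃ c < 1, ∀ x ∈ Icc a b, Real.cos x ≤ c := by
  obtain ⟨x, hx, h⟩ := isCompact_Icc.exists_isMaxOn (nonempty_Icc.2 hab)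
    Real.continuous_cos.continuousOn
  refine ⟨Real.cos x, lt_of_le_of_ne (Real.cos_le_one x) fun e => ?_, fun y hy => h hy⟩
  have := (Real.cos_eq_one_iff_of_lt_of_lt (by linarith [hx.1]) (by linarith [hx.2])).1 e
  linarith [hx.1]

/-- An arc that ends on the ray and meets each direction once is a `DownArc` or an `UpArc`: its
angle is monotone along the arc and comes arbitrarily close to `0` or `2π`. -/
theorem half_shape {γ : ℝ → ℂ} (hc : ContinuousOn γ (Icc 0 1)) (h0 : ∀ t ∈ Icc (0:ℝ) 1, γ t ≠ 0)
    (h1 : ang (γ 1) = 2 * Real.pi) (hinj : InjOn (fun t => ang (γ t)) (Icc 0 1)) :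
    DownArc (γ '' Icc 0 1) (ang (γ 0)) ∨ UpArc (γ '' Icc 0 1) (ang (γ 0)) := by
  have hlt : ∀ t ∈ Ico (0:ℝ) 1, ang (γ t) < 2 * Real.pi := fun t ht =>
    lt_of_le_of_ne (ang_le _) fun e => by
      have := hinj (Ico_subset_Icc_self ht) (right_mem_Icc.2 zero_le_one) (e.trans h1.symm)
      linarith [ht.2]
  have hg : ContinuousOn (fun t => ang (γ t)) (Ico 0 1) := fun t ht =>
    (continuousAt_ang (h0 t (Ico_subset_Icc_self ht)) (hlt t ht)).comp_continuousWithinAt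
      ((hc t (Ico_subset_Icc_self ht)).mono Ico_subset_Icc_self)
  -- the angle comes arbitrarily close to the ray
  have hnear : ∀ c < 1, ∃ t ∈ Ico (0:ℝ) 1, c < Real.cos (ang (γ t)) := by
    intro c hc1
    have hcos : ContinuousWithinAt (fun t => (γ t).re / ‖γ t‖) (Ico 0 1) 1 := by
      have h2 := (hc 1 (right_mem_Icc.2 zero_le_one)).mono (Ico_subset_Icc_self)
      exact (Complex.continuous_re.continuousAt.comp_continuousWithinAt h2).div h2.norm
        (norm_ne_zero_iff.2 (h0 1 (right_mem_Icc.2 zero_le_one)))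
    have h3 : (γ 1).re / ‖γ 1‖ = 1 := by
      rw [← cos_ang (h0 1 (right_mem_Icc.2 zero_le_one)), h1, Real.cos_two_pi]
    have h4 := hcos.eventually (lt_mem_nhds (show c < (γ 1).re / ‖γ 1‖ by rwa [h3]))
    have : (nhdsWithin (1:ℝ) (Ico 0 1)).NeBot := by
      rw [← mem_closure_iff_nhdsWithin_neBot, closure_Ico zero_ne_one]
      exact right_mem_Icc.2 zero_le_one
    obtain ⟨t, h5, h6⟩ := (h4.and self_mem_nhdsWithin).exists
    exact ⟨t, h6, by rwa [cos_ang (h0 t (Ico_subset_Icc_self h6))]⟩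
  have z0 : (0:ℝ) ∈ Ico (0:ℝ) 1 := ⟨le_rfl, zero_lt_one⟩
  have hpc : IsPreconnected (Ico (0:ℝ) 1) := isPreconnected_Ico
  have hmono : (∀ t ∈ Ico (0:ℝ) 1, ang (γ t) ≤ ang (γ 0)) ∨
      (∀ t ∈ Ico (0:ℝ) 1, ang (γ 0) ≤ ang (γ t)) := by
    by_contra hcon
    push Not at hcon
    obtain ⟨⟨s, hs, hs'⟩, ⟨t, ht, ht'⟩⟩ := hcon
    have hs0 : 0 < s := lt_of_le_of_ne hs.1 (by rintro rfl; exact lt_irrefl _ hs')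
    have ht0 : 0 < t := lt_of_le_of_ne ht.1 (by rintro rfl; exact lt_irrefl _ ht')
    obtain ⟨r, hr, e⟩ := (isPreconnected_Ioo (a := (0:ℝ)) (b := 1)).intermediate_value ⟨ht0, ht.2⟩
      ⟨hs0, hs.2⟩ (hg.mono Ioo_subset_Ico_self) ⟨ht'.le, hs'.le⟩
    have := hinj (Ioo_subset_Icc_self hr) (left_mem_Icc.2 zero_le_one) e
    linarith [hr.1]
  rcases hmono with hm | hm
  · left
    constructor
    · rintro _ ⟨t, ht, rfl⟩
      rcases ht.2.lt_or_eq with h | rfl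
      · exact Or.inl (hm t ⟨ht.1, h⟩)
      · exact Or.inr h1
    · intro θ ha hb
      obtain ⟨c, hc1, hc2⟩ := cos_bound ha (hlt 0 z0) hb
      obtain ⟨t, ht, htc⟩ := hnear c hc1
      have : ang (γ t) < θ := by
        by_contra hcon
        linarith [hc2 _ ⟨not_lt.1 hcon, hm t ht⟩]
      obtain ⟨s, hs, e⟩ := hpc.intermediate_value ht z0 hg ⟨this.le, hb⟩
      exact ⟨γ s, ⟨s, Ico_subset_Icc_self hs, rfl⟩, e⟩
  · right
    constructor
    · rintro _ ⟨t, ht, rfl⟩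
      rcases ht.2.lt_or_eq with h | rfl
      · exact hm t ⟨ht.1, h⟩
      · rw [h1]; exact ang_le _
    · intro θ ha hb
      rcases hb.eq_or_lt with rfl | hb
      · exact ⟨γ 1, ⟨1, right_mem_Icc.2 zero_le_one, rfl⟩, h1⟩
      obtain ⟨c, hc1, hc2⟩ := cos_bound (ang_pos _) hb ha
      obtain ⟨t, ht, htc⟩ := hnear c hc1
      have : θ < ang (γ t) := by
        by_contra hcon
        linarith [hc2 _ ⟨hm t ht, not_lt.1 hcon⟩]
      obtain ⟨s, hs, e⟩ := hpc.intermediate_value z0 ht hg ⟨ha, this.le⟩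
      exact ⟨γ s, ⟨s, Ico_subset_Icc_self hs, rfl⟩, e⟩

/-! ### Drawings in normal position -/

/-- A generalized twisted drawing of the complete graph on `{0, …, n - 1}` in normal position: in
the complex plane, with centre `0`, the nonnegative reals as ray, and the vertices `V i` numbered by
increasing angle. The arc of the edge `ij` is `K i j`. Indices are natural numbers and only those
below `n` matter. -/
structure Pic (n : ℕ) where
  V : ℕ → ℂ
  K : ℕ → ℕ → Set ℂ
  Ksymm : ∀ i j, K i j = K j i
  arc : ∀ i j, i < n → j < n → i ≠ j → ∃ f : ℝ → ℂ, ContinuousOn f (Icc 0 1) ∧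
    InjOn f (Icc 0 1) ∧ f 0 = V i ∧ f 1 = V j ∧ K i j = f '' Icc 0 1
  vnot : ∀ i j k, i < n → j < n → k < n → i ≠ j → k ≠ i → k ≠ j → V k ∉ K i j
  adj : ∀ i j k, i < n → j < n → k < n → i ≠ j → i ≠ k → j ≠ k → K i j ∩ K i k = {V i}
  indep : ∀ i j k l, i < n → j < n → k < n → l < n → i ≠ j → k ≠ l → i ≠ k → i ≠ l → j ≠ k →
    j ≠ l → (K i j ∩ K k l).Subsingleton
  nz : ∀ i j, i < n → j < n → i ≠ j → (0 : ℂ) ∉ K i j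
  amono : ∀ i j, i < n → j < n → i ≠ j → InjOn ang (K i j)
  ray : ∀ i j, i < n → j < n → i ≠ j → ∃ z ∈ K i j, ang z = 2 * Real.pi
  tmono : ∀ i j, i < j → j < n → ang (V i) < ang (V j)

namespace Pic
variable {n : ℕ}

theorem V_mem (D : Pic n) {i j : ℕ} (hi : i < n) (hj : j < n) (hij : i ≠ j) : D.V i ∈ D.K i j := by
  obtain ⟨f, -, -, h0, -, h⟩ := D.arc i j hi hj hij
  rw [h]; exact ⟨0, left_mem_Icc.2 zero_le_one, h0⟩

theorem V_mem' (D : Pic n) {i j : ℕ} (hi : i < n) (hj : j < n) (hij : i ≠ j) :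
    D.V j ∈ D.K i j := by
  rw [D.Ksymm]; exact D.V_mem hj hi hij.symm

theorem compact (D : Pic n) {i j : ℕ} (hi : i < n) (hj : j < n) (hij : i ≠ j) :
    IsCompact (D.K i j) := by
  obtain ⟨f, hc, -, -, -, h⟩ := D.arc i j hi hj hij
  rw [h]; exact isCompact_Icc.image_of_continuousOn hc

/-- An edge between two vertices off the ray runs through the ray, hence occupies all angles
outside the open sector between its ends, and no other. The two halves into which the ray cuts it
approach the ray from different sides, as otherwise they would share an angle. -/
theorem edge_shape (D : Pic n) {i j : ℕ} (hi : i < n) (hj : j < n) (hij : i ≠ j)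
    (hlt : ang (D.V i) < ang (D.V j)) (hj2 : ang (D.V j) < 2 * Real.pi) :
    (∀ z ∈ D.K i j, ang z ≤ ang (D.V i) ∨ ang (D.V j) ≤ ang z) ∧
    ∀ θ, (0 < θ ∧ θ ≤ ang (D.V i)) ∨ (ang (D.V j) ≤ θ ∧ θ ≤ 2 * Real.pi) →
      ∃ z ∈ D.K i j, ang z = θ := by
  obtain ⟨f, hc, hinj, h0, h1, hK⟩ := D.arc i j hi hj hij
  have ham := D.amono i j hi hj hij
  have hnz := D.nz i j hi hj hij
  obtain ⟨_, hw, hw2⟩ := D.ray i j hi hj hij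
  rw [hK] at ham hnz hw ⊢
  obtain ⟨t, ht, rfl⟩ := hw
  have fi : ∀ a ∈ Icc (0:ℝ) 1, ∀ b ∈ Icc (0:ℝ) 1, ang (f a) = ang (f b) → a = b :=
    fun a ha b hb e => hinj ha hb (ham ⟨a, ha, rfl⟩ ⟨b, hb, rfl⟩ e)
  have t0 : 0 < t := lt_of_le_of_ne ht.1 (by rintro rfl; rw [h0] at hw2; linarith)
  have t1 : t < 1 := lt_of_le_of_ne ht.2 (by rintro rfl; rw [h1] at hw2; linarith)
  -- each half of the arc, run towards the ray
  have half : ∀ c, c ∈ Icc (0:ℝ) 1 → c ≠ t →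
      DownArc ((fun s => f (c + s * (t - c))) '' Icc 0 1) (ang (f c)) ∨
      UpArc ((fun s => f (c + s * (t - c))) '' Icc 0 1) (ang (f c)) := by
    intro c hcI hct
    have maps : MapsTo (fun s : ℝ => c + s * (t - c)) (Icc 0 1) (Icc 0 1) := by
      rintro s ⟨s0, s1⟩
      exact ⟨by nlinarith [hcI.1], by nlinarith [hcI.2]⟩
    have := half_shape (γ := fun s => f (c + s * (t - c))) (hc.comp (by fun_prop) maps)
      (fun s hs e => hnz ⟨_, maps hs, e⟩) (by simpa using hw2)
      (fun s hs s' hs' e => by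
        have := fi _ (maps hs) _ (maps hs') e
        have h2 : s * (t - c) = s' * (t - c) := by linarith
        exact mul_right_cancel₀ (sub_ne_zero.2 (Ne.symm hct)) h2)
    simpa using this
  have cover : ∀ z ∈ f '' Icc 0 1, z ∈ (fun s => f (0 + s * (t - 0))) '' Icc 0 1 ∨
      z ∈ (fun s => f (1 + s * (t - 1))) '' Icc 0 1 := by
    rintro _ ⟨r, hr, rfl⟩
    rcases le_total r t with h | h
    · left
      refine ⟨r / t, ⟨div_nonneg hr.1 t0.le, (div_le_one t0).2 h⟩, ?_⟩
      simp only [sub_zero, zero_add, div_mul_cancel₀ _ t0.ne']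
    · right
      refine ⟨(1 - r) / (1 - t), ⟨div_nonneg (by linarith [hr.2]) (by linarith),
        (div_le_one (by linarith)).2 (by linarith)⟩, ?_⟩
      have : (1 - r) / (1 - t) * (t - 1) = r - 1 := by
        have : 1 - t ≠ 0 := by linarith
        field_simp; ring
      simp only [this]; congr 1; ring
  have sub0 : ∀ z ∈ (fun s => f (0 + s * (t - 0))) '' Icc 0 1, z ∈ f '' Icc 0 1 := by
    rintro _ ⟨s, hs, rfl⟩
    exact ⟨_, ⟨by nlinarith [hs.1], by nlinarith [hs.2]⟩, rfl⟩
  have sub1 : ∀ z ∈ (fun s => f (1 + s * (t - 1))) '' Icc 0 1, z ∈ f '' Icc 0 1 := by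
    rintro _ ⟨s, hs, rfl⟩
    exact ⟨_, ⟨by nlinarith [hs.2], by nlinarith [hs.1]⟩, rfl⟩
  have clash : ∀ z ∈ (fun s => f (0 + s * (t - 0))) '' Icc 0 1,
      ∀ z' ∈ (fun s => f (1 + s * (t - 1))) '' Icc 0 1, ang z = ang z' →
      ang z = 2 * Real.pi := by
    rintro _ ⟨s, hs, rfl⟩ _ ⟨s', hs', rfl⟩ e
    have e2 := fi _ ⟨by nlinarith [hs.1], by nlinarith [hs.2]⟩ _
      ⟨by nlinarith [hs'.2], by nlinarith [hs'.1]⟩ e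
    have : 0 + s * (t - 0) = t := by
      apply le_antisymm
      · nlinarith [hs.2]
      · rw [e2]; nlinarith [hs'.2]
    simp only [this]; exact hw2
  have tpi := ang_pos (D.V i)
  have tpj := ang_pos (D.V j)
  have e0 := half 0 (left_mem_Icc.2 zero_le_one) t0.ne
  have e1 := half 1 (right_mem_Icc.2 zero_le_one) t1.ne'
  rw [h0] at e0
  rw [h1] at e1
  rcases e0 with e0 | e0 <;> rcases e1 with e1 | e1
  · exfalso
    obtain ⟨z, hz, a⟩ := e0.2 _ tpi le_rfl
    obtain ⟨z', hz', a'⟩ := e1.2 _ tpi hlt.le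
    linarith [clash z hz z' hz' (a.trans a'.symm)]
  · constructor
    · intro z hz
      rcases cover z hz with h | h
      · rcases e0.1 z h with h | h
        · exact Or.inl h
        · right; linarith
      · exact Or.inr (e1.1 z h)
    · rintro θ (⟨a, b⟩ | ⟨a, b⟩)
      · obtain ⟨z, hz, e⟩ := e0.2 θ a b
        exact ⟨z, sub0 z hz, e⟩
      · obtain ⟨z, hz, e⟩ := e1.2 θ a b
        exact ⟨z, sub1 z hz, e⟩
  · exfalso
    obtain ⟨z, hz, a⟩ := e0.2 _ le_rfl (hlt.trans hj2).le
    obtain ⟨z', hz', a'⟩ := e1.2 _ tpi hlt.le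
    linarith [clash z hz z' hz' (a.trans a'.symm)]
  · exfalso
    obtain ⟨z, hz, a⟩ := e0.2 _ hlt.le hj2.le
    obtain ⟨z', hz', a'⟩ := e1.2 _ le_rfl hj2.le
    linarith [clash z hz z' hz' (a.trans a'.symm)]

/-- An edge from a vertex on the ray stays on one side of it. -/
theorem oedge_shape (D : Pic n) {i o : ℕ} (hi : i < n) (ho : o < n) (hio : i ≠ o)
    (h2 : ang (D.V o) = 2 * Real.pi) :
    DownArc (D.K o i) (ang (D.V i)) ∨ UpArc (D.K o i) (ang (D.V i)) := by
  obtain ⟨f, hc, hinj, h0, h1, hK⟩ := D.arc i o hi ho hio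
  have ham := D.amono i o hi ho hio
  have hnz := D.nz i o hi ho hio
  rw [D.Ksymm o i]
  rw [hK] at ham hnz ⊢
  rw [← h0]
  refine half_shape hc (fun t ht e => hnz ⟨t, ht, e⟩) (by rw [h1, h2]) ?_
  exact fun a ha b hb e => hinj ha hb (ham ⟨a, ha, rfl⟩ ⟨b, hb, rfl⟩ e)

/-- The angle of vertex `i`. -/
noncomputable def τ (D : Pic n) (i : ℕ) : ℝ := ang (D.V i)

theorem edom_sub (D : Pic n) {i j : ℕ} (hi : i < n) (hj : j < n) (hij : i ≠ j)
    (hi2 : D.τ i < 2 * Real.pi) (hj2 : D.τ j < 2 * Real.pi) :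
    edom (2 * Real.pi) D.τ i j ⊆ angSet (D.K i j) := by
  wlog h : i < j generalizing i j
  · rw [edom_symm, D.Ksymm]
    exact this hj hi hij.symm hj2 hi2 (by omega)
  have hs := D.edge_shape hi hj hij (D.tmono i j h hj) hj2
  have hlt := D.tmono i j h hj
  rintro θ ⟨h0, h1, h2⟩
  rcases h0.eq_or_lt with rfl | h0
  · obtain ⟨z, hz, e⟩ := D.ray i j hi hj hij
    apply zero_mem_angSet
    rw [← e]; exact mem_angSet hz
  · obtain ⟨z, hz, rfl⟩ := hs.2 θ (by
      rcases h2 with h2 | h2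
      · exact Or.inl ⟨h0, h2.1⟩
      · exact Or.inr ⟨h2.2, h1⟩)
    exact mem_angSet hz

theorem mem_edom (D : Pic n) {i j : ℕ} (hi : i < n) (hj : j < n) (hij : i ≠ j)
    (hi2 : D.τ i < 2 * Real.pi) (hj2 : D.τ j < 2 * Real.pi) {z : ℂ} (hz : z ∈ D.K i j) :
    ang z ∈ edom (2 * Real.pi) D.τ i j := by
  wlog h : i < j generalizing i j
  · rw [edom_symm]
    exact this hj hi hij.symm hj2 hi2 (by rwa [D.Ksymm]) (by omega)
  have hlt := D.tmono i j h hj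
  refine ⟨(ang_pos z).le, ang_le z, ?_⟩
  show (_ ≤ ang (D.V i) ∧ _ ≤ ang (D.V j)) ∨ (ang (D.V i) ≤ _ ∧ ang (D.V j) ≤ _)
  rcases (D.edge_shape hi hj hij hlt hj2).1 z hz with h | h
  · left; constructor <;> linarith
  · right; constructor <;> linarith

/-- Equal radii at one angle give a common point. -/
theorem common {K K' : Set ℂ} (h0 : (0 : ℂ) ∉ K) {θ : ℝ} (a : 0 ≤ θ) (b : θ ≤ 2 * Real.pi)
    (h : θ ∈ angSet K) (h' : θ ∈ angSet K') (e : rad K θ = rad K' θ) :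
    ∃ p ∈ K ∩ K', θ = ang p ∨ (θ = 0 ∧ ang p = 2 * Real.pi) := by
  have m := rad_mem h
  have m' := rad_mem h'
  rw [← e] at m'
  exact ⟨_, ⟨m, m'⟩, ang_dir (pos_of_mem h0 (rad_nonneg K θ) m) a b⟩

/-- The radial functions of the edges among vertices off the ray. -/
noncomputable def toCore (D : Pic n) (N : ℕ) (hN : N ≤ n) (hτ : ∀ i, i < N → D.τ i < 2 * Real.pi) :
    Core N where
  P := 2 * Real.pi
  τ := D.τ
  h := fun i => ‖D.V i‖
  F := fun i j => rad (D.K i j)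
  tpos := fun i _ => ang_pos _
  tlt := hτ
  tmono := fun i j hij hj => D.tmono i j hij (by omega)
  symm := fun i j => by rw [D.Ksymm]
  cont := fun i j hi hj hij =>
    (continuousOn_rad (D.nz i j (by omega) (by omega) hij) (D.amono i j (by omega) (by omega) hij)
      (D.compact (by omega) (by omega) hij)).mono
      (D.edom_sub (by omega) (by omega) hij (hτ i hi) (hτ j hj))
  per := fun i j _ _ _ => rad_period _
  fend := fun i j hi hj hij => rad_ang (D.nz i j (by omega) (by omega) hij)
    (D.amono i j (by omega) (by omega) hij) (D.V_mem (by omega) (by omega) hij)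
  adj := fun i j k hi hj hk h1 h2 h3 θ ha hb e => by
    obtain ⟨p, hp, h⟩ := common (D.nz i j (by omega) (by omega) h1) ha.1 ha.2.1
      (D.edom_sub (by omega) (by omega) h1 (hτ i hi) (hτ j hj) ha)
      (D.edom_sub (by omega) (by omega) h2 (hτ i hi) (hτ k hk) hb) e
    rw [D.adj i j k (by omega) (by omega) (by omega) h1 h2 h3] at hp
    rw [mem_singleton_iff.1 hp] at h
    rcases h with h | h
    · exact h
    · exact absurd h.2 (hτ i hi).ne
  indep := fun i j k l hi hj hk hl h1 h2 h3 h4 h5 h6 θ θ' a b c d e f => by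
    have z := D.nz i j (by omega) (by omega) h1
    have s1 := D.edom_sub (by omega) (by omega) h1 (hτ i hi) (hτ j hj)
    have s2 := D.edom_sub (by omega) (by omega) h2 (hτ k hk) (hτ l hl)
    obtain ⟨p, hp, h⟩ := common z a.1 a.2.1 (s1 a) (s2 b) e
    obtain ⟨p', hp', h'⟩ := common z c.1 c.2.1 (s1 c) (s2 d) f
    have := D.indep i j k l (by omega) (by omega) (by omega) (by omega) h1 h2 h3 h4 h5 h6 hp hp'
    subst this
    rcases h with h | h <;> rcases h' with h' | h'
    · left; rw [h, h']
    · right; right; exact ⟨h.trans h'.2, h'.1⟩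
    · right; left; exact ⟨h.1, h'.trans h.2⟩
    · left; rw [h.1, h'.1]

theorem disjoint_of_Disj (D : Pic n) {N : ℕ} {hN : N ≤ n}
    {hτ : ∀ i, i < N → D.τ i < 2 * Real.pi} {i j k l : ℕ} (hi : i < N) (hj : j < N) (hk : k < N)
    (hl : l < N) (hij : i ≠ j) (hkl : k ≠ l) (h : (D.toCore N hN hτ).Disj i j k l) :
    Disjoint (D.K i j) (D.K k l) := by
  rw [Set.disjoint_left]
  intro z h1 h2
  refine h (ang z) (D.mem_edom (by omega) (by omega) hij (hτ i hi) (hτ j hj) h1)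
    (D.mem_edom (by omega) (by omega) hkl (hτ k hk) (hτ l hl) h2) ?_
  show rad _ _ = rad _ _
  rw [rad_ang (D.nz i j (by omega) (by omega) hij) (D.amono i j (by omega) (by omega) hij) h1,
    rad_ang (D.nz k l (by omega) (by omega) hkl) (D.amono k l (by omega) (by omega) hkl) h2]

section O
variable {N : ℕ}

/-- The edge from `o` to `i` leaves `o` in the direction of increasing angles. -/
def down (D : Pic n) (o i : ℕ) : Prop := DownArc (D.K o i) (D.τ i)

theorem odom_sub (D : Pic (N + 1)) (h2 : D.τ N = 2 * Real.pi) {i : ℕ} (hi : i < N) :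
    odom (2 * Real.pi) D.τ (D.down N) i ⊆ angSet (D.K N i) := by
  rintro θ ⟨h0, h1, ha, hb⟩
  by_cases hd : D.down N i
  · rcases h0.eq_or_lt with rfl | h0
    · apply zero_mem_angSet
      rw [← h2]
      exact mem_angSet (D.V_mem (by omega) (by omega) (by omega))
    · obtain ⟨z, hz, rfl⟩ := hd.2 θ h0 (ha hd)
      exact mem_angSet hz
  · have hu := (D.oedge_shape (i := i) (o := N) (by omega) (by omega) (by omega) h2).resolve_left hd
    obtain ⟨z, hz, rfl⟩ := hu.2 θ (hb hd) h1
    exact mem_angSet hz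

theorem lt_two_pi (D : Pic (N + 1)) (i : ℕ) (hi : i < N) : D.τ i < 2 * Real.pi :=
  (D.tmono i N hi (by omega)).trans_le (ang_le _)

/-- The radial functions of all edges when the last vertex `N` lies on the ray. At most one vertex
does, because the vertices have distinct angles. -/
noncomputable def toOSys (D : Pic (N + 1)) (h2 : D.τ N = 2 * Real.pi) : OSys N where
  toCore := D.toCore N (by omega) D.lt_two_pi
  A := D.down N
  u := ‖D.V N‖
  G := fun i => rad (D.K N i)
  contO := fun i hi => (continuousOn_rad (D.nz N i (by omega) (by omega) (by omega))
    (D.amono N i (by omega) (by omega) (by omega)) (D.compact (by omega) (by omega) (by omega))).mono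
      (D.odom_sub h2 hi)
  Gend := fun i hi => rad_ang (D.nz N i (by omega) (by omega) (by omega))
    (D.amono N i (by omega) (by omega) (by omega)) (D.V_mem' (by omega) (by omega) (by omega))
  GA := fun i hi _ => by
    rw [rad_period, ← h2]
    exact rad_ang (D.nz N i (by omega) (by omega) (by omega))
      (D.amono N i (by omega) (by omega) (by omega)) (D.V_mem (by omega) (by omega) (by omega))
  GB := fun i hi _ => by
    show rad _ (2 * Real.pi) = _
    rw [← h2]
    exact rad_ang (D.nz N i (by omega) (by omega) (by omega))
      (D.amono N i (by omega) (by omega) (by omega)) (D.V_mem (by omega) (by omega) (by omega))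
  o_ne := fun i j hi hj hij e => by
    have hm := D.edom_sub (i := i) (j := j) (by omega) (by omega) hij (D.lt_two_pi i hi)
      (D.lt_two_pi j hj) (show (2 * Real.pi) ∈ _ from ⟨by linarith [Real.pi_pos], le_rfl,
        Or.inr ⟨(D.lt_two_pi i hi).le, (D.lt_two_pi j hj).le⟩⟩)
    have hr := rad_mem hm
    have e' : rad (D.K i j) 0 = ‖D.V N‖ := e
    rw [← rad_period, e', ← h2] at hr
    rw [show D.τ N = ang (D.V N) from rfl, polar_s1] at hr
    exact D.vnot i j N (by omega) (by omega) (by omega) hij (by omega) (by omega) hr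
  adjO := fun i j hi hj hij θ a b e => by
    obtain ⟨p, hp, h⟩ := common (D.nz N i (by omega) (by omega) (by omega)) a.1 a.2.1
      (D.odom_sub h2 hi a) (D.odom_sub h2 hj b) e
    rw [D.adj N i j (by omega) (by omega) (by omega) (by omega) (by omega) hij] at hp
    rw [mem_singleton_iff.1 hp] at h
    rcases h with h | h
    · right; exact h.trans h2
    · left; exact h.1
  adjI := fun i j hi hj hij θ a b e => by
    obtain ⟨p, hp, h⟩ := common (D.nz N i (by omega) (by omega) (by omega)) a.1 a.2.1
      (D.odom_sub h2 hi a)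
      (D.edom_sub (by omega) (by omega) hij (D.lt_two_pi i hi) (D.lt_two_pi j hj) b) e
    rw [D.Ksymm N i, D.adj i N j (by omega) (by omega) (by omega) (by omega) hij (by omega)] at hp
    rw [mem_singleton_iff.1 hp] at h
    rcases h with h | h
    · exact h
    · exact absurd h.2 (D.lt_two_pi i hi).ne
  indepO := fun i j k hi hj hk h1 h2' h3 θ θ' a b c d e f => by
    have z := D.nz N i (by omega) (by omega) (by omega)
    have s2 := D.edom_sub (i := j) (j := k) (by omega) (by omega) h3 (D.lt_two_pi j hj)
      (D.lt_two_pi k hk)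
    obtain ⟨p, hp, h⟩ := common z a.1 a.2.1 (D.odom_sub h2 hi a) (s2 b) e
    obtain ⟨p', hp', h'⟩ := common z c.1 c.2.1 (D.odom_sub h2 hi c) (s2 d) f
    have := D.indep N i j k (by omega) (by omega) (by omega) (by omega) (by omega) h3 (by omega)
      (by omega) h1 h2' hp hp'
    subst this
    have tl := D.lt_two_pi i hi
    have tp : 0 < D.τ i := ang_pos _
    have key : ∀ θ₁ θ₂, θ₁ ∈ odom (2 * Real.pi) D.τ (D.down N) i →
        θ₂ ∈ odom (2 * Real.pi) D.τ (D.down N) i → θ₁ = ang p → θ₂ = 0 →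
        ang p = 2 * Real.pi → False := by
      rintro θ₁ θ₂ ⟨-, -, a1, a2⟩ ⟨-, -, b1, b2⟩ e1 e2 e3
      by_cases hd : D.down N i
      · linarith [a1 hd]
      · linarith [b2 hd]
    rcases h with h | h <;> rcases h' with h' | h'
    · rw [h, h']
    · exact (key θ θ' a c h h'.1 h'.2).elim
    · exact (key θ' θ c a h' h.1 h.2).elim
    · rw [h.1, h'.1]

theorem disjoint_of_DisjO (D : Pic (N + 1)) (h2 : D.τ N = 2 * Real.pi) {i j k : ℕ} (hi : i < N)
    (hj : j < N) (hk : k < N) (hjk : j ≠ k) (h : (D.toOSys h2).DisjO i j k) :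
    Disjoint (D.K N i) (D.K j k) := by
  rw [Set.disjoint_left]
  intro z h1 h3
  have hzN : ang z ≠ 2 * Real.pi := fun e => by
    have := D.amono N i (by omega) (by omega) (by omega) h1
      (D.V_mem (by omega) (by omega) (by omega)) (e.trans h2.symm)
    rw [this] at h3
    exact D.vnot j k N (by omega) (by omega) (by omega) hjk (by omega) (by omega) h3
  refine h (ang z) ?_ (D.mem_edom (by omega) (by omega) hjk (D.lt_two_pi j hj)
    (D.lt_two_pi k hk) h3) ?_
  · refine ⟨(ang_pos z).le, ang_le z, fun hd => ?_, fun hd => ?_⟩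
    · exact (hd.1 z h1).resolve_right hzN
    · exact ((D.oedge_shape (i := i) (o := N) (by omega) (by omega) (by omega)
        h2).resolve_left hd).1 z h1
  · show rad _ _ = rad _ _
    rw [rad_ang (D.nz N i (by omega) (by omega) (by omega))
        (D.amono N i (by omega) (by omega) (by omega)) h1,
      rad_ang (D.nz j k (by omega) (by omega) hjk) (D.amono j k (by omega) (by omega) hjk) h3]

end O

/-- The vertices can be ordered as a path in which edges that are not consecutive are disjoint. -/
def HasPath (D : Pic n) : Prop :=
  ∃ z : ℕ → ℕ, (∀ p, p < n → z p < n) ∧ (∀ p q, p < n → q < n → z p = z q → p = q) ∧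
    ∀ p q, p + 1 < q → q + 1 < n → Disjoint (D.K (z p) (z (p + 1))) (D.K (z q) (z (q + 1)))

theorem hasPath_of_lt (D : Pic n) (hn : 0 < n) (h : ∀ i, i < n → D.τ i < 2 * Real.pi) :
    D.HasPath := by
  have hx : 0 + n / 2 < n := by omega
  refine ⟨zig n 0, fun p => zig_lt hx, fun p q => zig_inj hx, fun p q hpq hq => ?_⟩
  refine D.disjoint_of_Disj (hN := le_rfl) (hτ := h) (zig_lt hx (by omega))
    (zig_lt hx (by omega)) (zig_lt hx (by omega)) (zig_lt hx (by omega)) (fun e => ?_)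
    (fun e => ?_) (Core.zig_disj _ hx hpq hq)
  · have := zig_inj hx (by omega) (by omega) e; omega
  · have := zig_inj hx (by omega) (by omega) e; omega

/-- The path of `OSys.good` with the vertex on the ray inserted. -/
theorem hasPath_of_eq {N : ℕ} (D : Pic (N + 1)) (h2 : D.τ N = 2 * Real.pi) : D.HasPath := by
  obtain ⟨z, t, h1, hz, h3, h4, h5⟩ := (D.toOSys h2).good
  let w : ℕ → ℕ := fun q => if q < t then z q else if q = t then N else z (q - 1)
  have w1 : ∀ q, q < t → w q = z q := fun q h => if_pos h
  have w2 : w t = N := by simp [w]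
  have w3 : ∀ q, t < q → w q = z (q - 1) := fun q h => by
    simp only [w]; rw [if_neg (by omega), if_neg (by omega)]
  have zne : ∀ p q, p < N → q < N → p ≠ q → z p ≠ z q := fun p q a b c e => c (hz p q a b e)
  -- edges of the new path that avoid `o`
  have wE : ∀ p, p < N → p + 1 ≠ t → p ≠ t → ∃ r, r + 1 < N ∧ w p = z r ∧ w (p + 1) = z (r + 1) ∧
      (r = p ∧ p + 1 < t ∨ r + 1 = p ∧ t < p) := by
    intro p hp a b
    rcases lt_or_gt_of_ne b with h | h
    · exact ⟨p, by omega, w1 p h, w1 _ (by omega), by omega⟩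
    · refine ⟨p - 1, by omega, w3 p h, ?_, by omega⟩
      rw [w3 _ (by omega)]; congr 1; omega
  -- edges at `o`
  have wO : ∀ p, p < N → (p + 1 = t ∨ p = t) → ∃ v, v < N ∧ (v + 1 = t ∨ v = t) ∧ v = p ∧
      D.K (w p) (w (p + 1)) = D.K N (z v) := by
    rintro p hp (h | h)
    · refine ⟨p, hp, by omega, rfl, ?_⟩
      rw [w1 p (by omega), h, w2, D.Ksymm]
    · refine ⟨p, hp, by omega, rfl, ?_⟩
      rw [h, w2, w3 _ (by omega)]; rfl
  have oe : ∀ v r, v < N → r + 1 < N → (v + 1 = t ∨ v = t) → r ≠ v → r + 1 ≠ v →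
      Disjoint (D.K N (z v)) (D.K (z r) (z (r + 1))) := fun v r a b c d e =>
    D.disjoint_of_DisjO h2 (h1 v a) (h1 r (by omega)) (h1 _ b) (zne _ _ (by omega) b (by omega))
      (h5 v a c r b d e)
  have ee : ∀ r s, r + 1 < s → s + 1 < N →
      Disjoint (D.K (z r) (z (r + 1))) (D.K (z s) (z (s + 1))) := fun r s a b =>
    D.disjoint_of_Disj (hN := by omega) (hτ := D.lt_two_pi) (h1 _ (by omega)) (h1 _ (by omega))
      (h1 _ (by omega)) (h1 _ (by omega)) (zne _ _ (by omega) (by omega) (by omega))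
      (zne _ _ (by omega) (by omega) (by omega)) (h4 r s a b)
  refine ⟨w, fun p hp => ?_, fun p q hp hq e => ?_, fun p q hpq hq => ?_⟩
  · rcases lt_trichotomy p t with h | h | h
    · rw [w1 p h]; have := h1 p (by omega); omega
    · rw [h, w2]; omega
    · rw [w3 p h]; have := h1 (p - 1) (by omega); omega
  · rcases lt_trichotomy p t with h | h | h <;> rcases lt_trichotomy q t with h' | h' | h'
    · rw [w1 p h, w1 q h'] at e; exact hz p q (by omega) (by omega) e
    · rw [w1 p h, h', w2] at e; have := h1 p (by omega); omega
    · rw [w1 p h, w3 q h'] at e; have := hz p (q - 1) (by omega) (by omega) e; omega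
    · rw [h, w2, w1 q h'] at e; have := h1 q (by omega); omega
    · omega
    · rw [h, w2, w3 q h'] at e; have := h1 (q - 1) (by omega); omega
    · rw [w3 p h, w1 q h'] at e; have := hz (p - 1) q (by omega) (by omega) e; omega
    · rw [w3 p h, h', w2] at e; have := h1 (p - 1) (by omega); omega
    · rw [w3 p h, w3 q h'] at e; have := hz (p - 1) (q - 1) (by omega) (by omega) e; omega
  · by_cases hp : p + 1 = t ∨ p = t
    · obtain ⟨v, hv, hvt, rfl, e⟩ := wO p (by omega) hp
      obtain ⟨r, hr, e1, e2, e3⟩ := wE q (by omega) (by omega) (by omega)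
      rw [e, e1, e2]
      exact oe v r hv hr hvt (by omega) (by omega)
    · obtain ⟨r, hr, e1, e2, e3⟩ := wE p (by omega) (by omega) (by omega)
      by_cases hq' : q + 1 = t ∨ q = t
      · obtain ⟨v, hv, hvt, rfl, e⟩ := wO q (by omega) hq'
        rw [e, e1, e2]
        exact (oe v r hv hr hvt (by omega) (by omega)).symm
      · obtain ⟨s, hs, e1', e2', e3'⟩ := wE q (by omega) (by omega) (by omega)
        rw [e1, e2, e1', e2']
        exact ee r s (by omega) hs

theorem hasPath (D : Pic n) (hn : 0 < n) : D.HasPath := by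
  obtain ⟨N, rfl⟩ : ∃ N, n = N + 1 := ⟨n - 1, by omega⟩
  rcases (ang_le (D.V N)).lt_or_eq with h | h
  · refine D.hasPath_of_lt hn fun i hi => ?_
    rcases (Nat.lt_succ_iff.1 hi).eq_or_lt with rfl | hi
    · exact h
    · exact D.lt_two_pi i hi
  · exact D.hasPath_of_eq h

end Pic

/-! ### Normalization of a drawing -/

/-- The affine map of the plane onto `ℂ` that moves the centre `O` to `0` and the ray from `O`
in direction `d` to the nonnegative reals. -/
noncomputable def toC (O d x : Pt) : ℂ :=
  ((x.1 - O.1 : ℝ) + (x.2 - O.2 : ℝ) * Complex.I) / ((d.1 : ℝ) + (d.2 : ℝ) * Complex.I)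

theorem toC_den {d : Pt} (hd : d ≠ 0) : ((d.1 : ℝ) + (d.2 : ℝ) * Complex.I : ℂ) ≠ 0 := by
  intro h
  apply hd
  have h1 := congrArg Complex.re h
  have h2 := congrArg Complex.im h
  simp at h1 h2
  exact Prod.ext h1 h2

theorem toC_cont (O d : Pt) : Continuous (toC O d) := by
  unfold toC; fun_prop

theorem toC_eq {O d : Pt} (hd : d ≠ 0) {x : Pt} {z : ℂ} (h : toC O d x = z) :
    x = O + ((z * ((d.1 : ℝ) + (d.2 : ℝ) * Complex.I)).re,
      (z * ((d.1 : ℝ) + (d.2 : ℝ) * Complex.I)).im) := by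
  unfold toC at h
  rw [div_eq_iff (toC_den hd)] at h
  rw [← h]
  ext <;> simp

theorem toC_inj {O d : Pt} (hd : d ≠ 0) : Function.Injective (toC O d) := fun x y h => by
  rw [toC_eq hd h, ← toC_eq hd (rfl : toC O d y = _)]

theorem toC_zero {O d : Pt} (hd : d ≠ 0) {x : Pt} (h : toC O d x = 0) : x = O := by
  rw [toC_eq hd h]; ext <;> simp

theorem toC_ray {O d : Pt} (hd : d ≠ 0) (t : ℝ) : toC O d (O + t • d) = t := by
  unfold toC
  rw [div_eq_iff (toC_den hd)]
  apply Complex.ext <;> simp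

/-- The direction of the image of `x`, pulled back to the plane, spans a ray from `O` through `x`. -/
theorem toC_mem_ray {O d : Pt} (hd : d ≠ 0) (x : Pt) :
    x ∈ rayFrom O ((dir (ang (toC O d x)) * ((d.1 : ℝ) + (d.2 : ℝ) * Complex.I)).re,
      (dir (ang (toC O d x)) * ((d.1 : ℝ) + (d.2 : ℝ) * Complex.I)).im) := by
  refine ⟨‖toC O d x‖, norm_nonneg _, ?_⟩
  have h := toC_eq hd (polar_s1 (toC O d x)).symm
  rw [mul_assoc, Complex.re_ofReal_mul, Complex.im_ofReal_mul] at h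
  exact h

theorem ang_pos_real {t : ℝ} (ht : 0 < t) : ang (t : ℂ) = 2 * Real.pi := by
  unfold ang
  rw [← Complex.ofReal_neg, Complex.arg_ofReal_of_neg (by linarith)]
  ring

namespace SimpleDrawing

theorem CMonotoneAt.injOn_ang {n : ℕ} {D : SimpleDrawing n} {O d : Pt} (h : D.CMonotoneAt O)
    (hd : d ≠ 0) {i j : Fin n} (hij : i ≠ j) : InjOn ang (toC O d '' D.arc i j) := by
  rintro _ ⟨x, hx, rfl⟩ _ ⟨y, hy, rfl⟩ e
  have hx' := toC_mem_ray (O := O) hd x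
  have hy' := toC_mem_ray (O := O) hd y
  rw [← e] at hy'
  congr 1
  refine h.2 _ (fun h0 => ?_) i j hij ⟨hx', hx⟩ ⟨hy', hy⟩
  refine mul_ne_zero (dir_ne (ang (toC O d x))) (toC_den hd) (Complex.ext ?_ ?_)
  · exact congrArg Prod.fst h0
  · exact congrArg Prod.snd h0

/-- Each numbering `e` of the vertices by increasing angle around `O` turns a generalized twisted
drawing into a normalized one. -/
noncomputable def toPic {n : ℕ} (D : SimpleDrawing n) {O d : Pt} (h : D.GenTwistedAt O d)
    (e : ℕ → Fin n) (he : ∀ i j, i < n → j < n → e i = e j → i = j)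
    (hm : ∀ i j, i < j → j < n → ang (toC O d (D.vtx (e i))) ≤ ang (toC O d (D.vtx (e j)))) :
    Pic n where
  V := fun i => toC O d (D.vtx (e i))
  K := fun i j => toC O d '' D.arc (e i) (e j)
  Ksymm := fun i j => by rw [D.arc_symm]
  arc := fun i j hi hj hij => by
    obtain ⟨f, h1, h2, h3, h4, h5⟩ := D.arc_simple (e i) (e j) fun a => hij (he i j hi hj a)
    refine ⟨toC O d ∘ f, (toC_cont O d).comp_continuousOn h1, (toC_inj h.2.1).comp_injOn h2,
      ?_, ?_, ?_⟩
    · simp [h3]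
    · simp [h4]
    · rw [h5, image_comp]
  vnot := fun i j k hi hj hk h1 h2 h3 => by
    rw [(toC_inj h.2.1).mem_set_image]
    exact D.vtx_not_mem _ _ _ (fun a => h1 (he _ _ hi hj a)) (fun a => h2 (he _ _ hk hi a))
      (fun a => h3 (he _ _ hk hj a))
  adj := fun i j k hi hj hk h1 h2 h3 => by
    rw [← image_inter (toC_inj h.2.1), D.adj_inter _ _ _ (fun a => h1 (he _ _ hi hj a))
      (fun a => h2 (he _ _ hi hk a)) (fun a => h3 (he _ _ hj hk a)), image_singleton]
  indep := fun i j k l hi hj hk hl h1 h2 h3 h4 h5 h6 => by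
    rw [← image_inter (toC_inj h.2.1)]
    exact (D.indep_inter _ _ _ _ (fun a => h1 (he _ _ hi hj a)) (fun a => h2 (he _ _ hk hl a))
      (fun a => h3 (he _ _ hi hk a)) (fun a => h4 (he _ _ hi hl a))
      (fun a => h5 (he _ _ hj hk a)) (fun a => h6 (he _ _ hj hl a))).image _
  nz := fun i j hi hj hij => by
    rintro ⟨x, hx, h0⟩
    apply h.1.1
    rw [← toC_zero h.2.1 h0]
    exact mem_iUnion.2 ⟨_, mem_iUnion.2 ⟨_, mem_iUnion.2 ⟨fun a => hij (he i j hi hj a), hx⟩⟩⟩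
  amono := fun i j hi hj hij => h.1.injOn_ang h.2.1 fun a => hij (he i j hi hj a)
  ray := fun i j hi hj hij => by
    have hne : e i ≠ e j := fun a => hij (he i j hi hj a)
    obtain ⟨x, ⟨t, ht, rfl⟩, hx⟩ := h.2.2 _ _ hne
    refine ⟨_, ⟨_, hx, rfl⟩, ?_⟩
    rw [toC_ray h.2.1]
    refine ang_pos_real (lt_of_le_of_ne ht ?_)
    rintro rfl
    apply h.1.1
    rw [zero_smul, add_zero] at hx
    exact mem_iUnion.2 ⟨_, mem_iUnion.2 ⟨_, mem_iUnion.2 ⟨hne, hx⟩⟩⟩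
  tmono := fun i j hij hj => by
    have hne : e i ≠ e j := fun a => hij.ne (he i j (hij.trans hj) hj a)
    refine lt_of_le_of_ne (hm i j hij hj) fun a => ?_
    obtain ⟨f, -, -, h3, h4, h5⟩ := D.arc_simple _ _ hne
    have m1 : D.vtx (e i) ∈ D.arc (e i) (e j) := by
      rw [h5, ← h3]; exact ⟨0, left_mem_Icc.2 zero_le_one, rfl⟩
    have m2 : D.vtx (e j) ∈ D.arc (e i) (e j) := by
      rw [h5, ← h4]; exact ⟨1, right_mem_Icc.2 zero_le_one, rfl⟩
    exact hne (D.vtx_inj (toC_inj h.2.1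
      (h.1.injOn_ang h.2.1 hne ⟨_, m1, rfl⟩ ⟨_, m2, rfl⟩ a)))

/-- Consecutive edges of a path never cross. -/
theorem not_crosses_adj {n : ℕ} (D : SimpleDrawing n) {i j k : Fin n} (h1 : i ≠ j) (h2 : j ≠ k)
    (h3 : i ≠ k) : ¬ D.Crosses i j j k := by
  rintro ⟨x, hx, hx', h⟩
  have : x ∈ D.arc j i ∩ D.arc j k := ⟨by rwa [D.arc_symm], hx'⟩
  rw [D.adj_inter j i k h1.symm h2 h3] at this
  exact h ⟨Or.inr this, Or.inl this⟩

theorem Crosses.symm {n : ℕ} {D : SimpleDrawing n} {i j k l : Fin n} (h : D.Crosses i j k l) :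
    D.Crosses k l i j := by
  obtain ⟨x, h1, h2, h3⟩ := h
  exact ⟨x, h2, h1, fun h => h3 h.symm⟩

end SimpleDrawing

/-- Every generalized twisted drawing of `K n` contains a plane
Hamiltonian path. -/
theorem stmt_1 (n : ℕ) (D : SimpleDrawing n) (h : D.GenTwisted) :
    ∃ σ : Equiv.Perm (Fin n),
      ∀ (a b : ℕ) (ha : a + 1 < n) (hb : b + 1 < n), a ≠ b →
        ¬ D.Crosses (σ ⟨a, by omega⟩) (σ ⟨a + 1, ha⟩) (σ ⟨b, by omega⟩) (σ ⟨b + 1, hb⟩) := by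
  obtain ⟨O, d, h⟩ := h
  rcases Nat.eq_zero_or_pos n with rfl | hn
  · exact ⟨1, fun a b ha => absurd ha (by omega)⟩
  let g : Fin n → ℝ := fun i => ang (toC O d (D.vtx i))
  let s := Tuple.sort g
  have hs : Monotone (g ∘ s) := Tuple.monotone_sort g
  let e : ℕ → Fin n := fun k => if hk : k < n then s ⟨k, hk⟩ else s ⟨0, hn⟩
  have e1 : ∀ k (hk : k < n), e k = s ⟨k, hk⟩ := fun k hk => dif_pos hk
  have he : ∀ i j, i < n → j < n → e i = e j → i = j := fun i j hi hj a => by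
    rw [e1 i hi, e1 j hj] at a
    exact congrArg Fin.val (s.injective a)
  have hm : ∀ i j, i < j → j < n →
      ang (toC O d (D.vtx (e i))) ≤ ang (toC O d (D.vtx (e j))) := fun i j hij hj => by
    rw [e1 i (hij.trans hj), e1 j hj]
    exact hs (show (⟨i, hij.trans hj⟩ : Fin n) ≤ ⟨j, hj⟩ from hij.le)
  obtain ⟨z, hz, zi, hd⟩ := (D.toPic h e he hm).hasPath hn
  have hinj : Function.Injective fun k : Fin n => e (z k) := fun a b hab =>
    Fin.ext (zi a b a.2 b.2 (he _ _ (hz a a.2) (hz b b.2) hab))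
  let σ : Equiv.Perm (Fin n) := Equiv.ofBijective _ (Finite.injective_iff_bijective.1 hinj)
  have key : ∀ (a b : ℕ) (ha : a + 1 < n) (hb : b + 1 < n), a < b →
      ¬ D.Crosses (σ ⟨a, by omega⟩) (σ ⟨a + 1, ha⟩) (σ ⟨b, by omega⟩) (σ ⟨b + 1, hb⟩) := by
    intro a b ha hb hab
    rcases Nat.lt_or_ge (a + 1) b with h1 | h1
    · rintro ⟨x, hx, hx', -⟩
      exact Set.disjoint_left.1 (hd a b h1 hb) ⟨x, hx, rfl⟩ ⟨x, hx', rfl⟩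
    · obtain rfl : b = a + 1 := by omega
      have ne : ∀ p q : Fin n, p.1 ≠ q.1 → σ p ≠ σ q := fun p q hpq hσ =>
        hpq (congrArg Fin.val (σ.injective hσ))
      exact D.not_crosses_adj (ne _ _ (by simp)) (ne _ _ (by simp))
        (ne _ _ (show a ≠ a + 1 + 1 by omega))
  refine ⟨σ, fun a b ha hb hab hc => ?_⟩
  rcases lt_or_gt_of_ne hab with hab | hab
  · exact key a b ha hb hab hc
  · exact key b a hb ha hab hc.symm
end
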